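/- arXiv:2307.02652 — 6 statements merged into one kernel-verified Lean document; each statement's English description precedes it below -/
import Mathlib

section
/- For all positive integers k, ℓ, m, the following recursion holds: S⊖(k, ℓ | k, m) = S⊖(k, ℓ−1 | k, m) + S⊖(k, ℓ | k, m−1) − S⊖(k, ℓ−1 | k, m−1) + S⊖(k−1, ℓ | k−1, m) + |ℓ − m| · C(k−1+ℓ, ℓ) · C(k−1+m, m), where C(·,·) denotes a binomial coefficient. (Lemma 2.2.) -/
open Finset

open scoped Classical in
/-- `Par a b` is the set of Young diagrams (lower sets of boxes) fitting inside an
`a × b` rectangle, encoded as finsets of cells `(i, j)` with `i < a` and `j < b`. -/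
noncomputable def Par (a b : ℕ) : Finset (Finset (ℕ × ℕ)) :=
  ((Finset.range a ×ˢ Finset.range b).powerset).filter
    (fun S => IsLowerSet (S : Set (ℕ × ℕ)))

/-- `Sdiff a b c d` is the sum of `|λ ⊖ μ|` over all `λ ∈ Par(a×b)` and `μ ∈ Par(c×d)`. -/
noncomputable def Sdiff (a b c d : ℕ) : ℕ :=
  ∑ l ∈ Par a b, ∑ m ∈ Par c d, (symmDiff l m).card

theorem mem_Par {a b : ℕ} {S : Finset (ℕ × ℕ)} :
    S ∈ Par a b ↔ (∀ i j, (i, j) ∈ S → i < a ∧ j < b) ∧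
      (∀ i j i' j', i' ≤ i → j' ≤ j → (i, j) ∈ S → (i', j') ∈ S) := by
  unfold Par
  simp only [Finset.mem_filter, Finset.mem_powerset]
  constructor
  · rintro ⟨h1, h2⟩
    refine ⟨fun i j h => ?_, fun i j i' j' hi hj h => ?_⟩
    · simpa using h1 h
    · exact h2 (show ((i', j') : ℕ × ℕ) ≤ (i, j) from ⟨hi, hj⟩) h
  · rintro ⟨h1, h2⟩
    refine ⟨fun x h => ?_, fun x y hxy h => ?_⟩
    · simpa using h1 x.1 x.2 h
    · exact h2 x.1 x.2 y.1 y.2 hxy.1 hxy.2 h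

def shiftEmb : (ℕ × ℕ) ↪ (ℕ × ℕ) :=
  ⟨fun x => (x.1 + 1, x.2), fun x y h => by
    simp only [Prod.mk.injEq] at h
    exact Prod.ext (by omega) h.2⟩

theorem shiftEmb_apply (x : ℕ × ℕ) : shiftEmb x = (x.1 + 1, x.2) := rfl

/-- Add a first row of length `l` on top of `S`. -/
def extRow (l : ℕ) (S : Finset (ℕ × ℕ)) : Finset (ℕ × ℕ) :=
  ({0} ×ˢ Finset.range l) ∪ S.map shiftEmb

/-- Remove the first row. -/
noncomputable def stripRow (S : Finset (ℕ × ℕ)) : Finset (ℕ × ℕ) :=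
  S.preimage shiftEmb shiftEmb.injective.injOn

theorem mem_extRow_zero {l j : ℕ} {S : Finset (ℕ × ℕ)} : (0, j) ∈ extRow l S ↔ j < l := by
  simp [extRow, shiftEmb_apply]

theorem mem_extRow_succ {l i j : ℕ} {S : Finset (ℕ × ℕ)} :
    (i + 1, j) ∈ extRow l S ↔ (i, j) ∈ S := by
  simp [extRow, shiftEmb_apply]

theorem mem_stripRow {i j : ℕ} {S : Finset (ℕ × ℕ)} :
    (i, j) ∈ stripRow S ↔ (i + 1, j) ∈ S := by
  simp [stripRow, shiftEmb_apply]

theorem sum_Par {M : Type*} [AddCommMonoid M] (k l : ℕ) (f : Finset (ℕ × ℕ) → M) :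
    ∑ S ∈ Par (k + 1) (l + 1), f S
      = ∑ S ∈ Par (k + 1) l, f S + ∑ S ∈ Par k (l + 1), f (extRow (l + 1) S) := by
  rw [← Finset.sum_filter_add_sum_filter_not (Par (k + 1) (l + 1)) (fun S => (0, l) ∉ S)]
  congr 1
  · apply Finset.sum_congr _ (fun _ _ => rfl)
    ext S
    rw [Finset.mem_filter, mem_Par, mem_Par]
    constructor
    · rintro ⟨⟨h1, h2⟩, h3⟩
      refine ⟨fun i j h => ⟨(h1 i j h).1, ?_⟩, h2⟩
      by_contra hj
      exact h3 (h2 i j 0 l (Nat.zero_le _) (by omega) h)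
    · rintro ⟨h1, h2⟩
      refine ⟨⟨fun i j h => ⟨(h1 i j h).1, ?_⟩, h2⟩, fun h => ?_⟩
      · have := (h1 i j h).2
        omega
      · have := (h1 _ _ h).2
        omega
  · symm
    have key : ∀ S ∈ (Par (k + 1) (l + 1)).filter (fun S => ¬ (0, l) ∉ S),
        extRow (l + 1) (stripRow S) = S := by
      intro S hS
      rw [Finset.mem_filter, mem_Par] at hS
      obtain ⟨⟨h1, h2⟩, h3⟩ := hS
      ext ⟨i, j⟩
      cases i with
      | zero =>
        rw [mem_extRow_zero]
        refine ⟨fun h => h2 0 l 0 j le_rfl (by omega) (not_not.mp h3), fun h => (h1 _ _ h).2⟩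
      | succ i => rw [mem_extRow_succ, mem_stripRow]
    refine Finset.sum_nbij' (extRow (l + 1)) stripRow ?_ ?_ ?_ key (fun _ _ => rfl)
    · intro S hS
      rw [mem_Par] at hS
      obtain ⟨h1, h2⟩ := hS
      rw [Finset.mem_filter, mem_Par, not_not, mem_extRow_zero]
      refine ⟨⟨fun i j h => ?_, fun i j i' j' hi hj h => ?_⟩, by omega⟩
      · cases i with
        | zero => rw [mem_extRow_zero] at h; omega
        | succ i =>
          rw [mem_extRow_succ] at h
          have := h1 _ _ h
          omega
      · cases i with
        | zero =>
          obtain rfl : i' = 0 := by omega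
          rw [mem_extRow_zero] at h ⊢
          omega
        | succ i =>
          rw [mem_extRow_succ] at h
          cases i' with
          | zero =>
            have := h1 _ _ h
            rw [mem_extRow_zero]
            omega
          | succ i' =>
            rw [mem_extRow_succ]
            exact h2 _ _ _ _ (by omega) hj h
    · intro S hS
      rw [Finset.mem_filter, mem_Par] at hS
      obtain ⟨⟨h1, h2⟩, -⟩ := hS
      rw [mem_Par]
      refine ⟨fun i j h => ?_, fun i j i' j' hi hj h => ?_⟩
      · have := h1 _ _ (mem_stripRow.mp h)
        omega
      · exact mem_stripRow.mpr (h2 _ _ _ _ (by omega) hj (mem_stripRow.mp h))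
    · intro S _
      ext ⟨i, j⟩
      rw [mem_stripRow, mem_extRow_succ]

theorem Par_of_zero {a b : ℕ} (h : a = 0 ∨ b = 0) : Par a b = {∅} := by
  ext S
  rw [mem_Par, Finset.mem_singleton]
  constructor
  · rintro ⟨h1, -⟩
    apply Finset.eq_empty_of_forall_notMem
    rintro ⟨i, j⟩ hx
    have := h1 _ _ hx
    omega
  · rintro rfl
    simp

theorem card_Par (k l : ℕ) : (Par k l).card = (k + l).choose l := by
  induction k generalizing l with
  | zero => simp [Par_of_zero]
  | succ k ihk =>
    induction l with
    | zero => simp [Par_of_zero]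
    | succ l ihl =>
      have h := sum_Par k l (fun _ => (1 : ℕ))
      simp only [Finset.sum_const, smul_eq_mul, mul_one] at h
      rw [h, ihl, ihk, show k + 1 + (l + 1) = (k + 1 + l) + 1 by omega, Nat.choose_succ_succ,
        show k + (l + 1) = k + 1 + l by omega]

theorem card_symmDiff_range (l m : ℕ) :
    ((symmDiff (Finset.range l) (Finset.range m)).card : ℤ) = |(l : ℤ) - m| := by
  have aux : ∀ a b : ℕ, a ≤ b →
      ((symmDiff (Finset.range a) (Finset.range b)).card : ℤ) = |(a : ℤ) - b| := by
    intro a b h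
    rw [symmDiff_of_le (Finset.range_subset_range.mpr h),
      Finset.card_sdiff_of_subset (Finset.range_subset_range.mpr h), Finset.card_range,
      Finset.card_range, abs_of_nonpos (by omega)]
    omega
  rcases le_total l m with h | h
  · exact aux l m h
  · rw [symmDiff_comm, aux m l h, abs_sub_comm]

theorem card_symmDiff_extRow (l m : ℕ) (S T : Finset (ℕ × ℕ)) :
    ((symmDiff (extRow l S) (extRow m T)).card : ℤ)
      = |(l : ℤ) - m| + ((symmDiff S T).card : ℤ) := by
  have h : symmDiff (extRow l S) (extRow m T)
      = ({0} ×ˢ symmDiff (Finset.range l) (Finset.range m)) ∪ (symmDiff S T).map shiftEmb := by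
    ext ⟨i, j⟩
    cases i with
    | zero =>
      rw [Finset.mem_symmDiff, mem_extRow_zero, mem_extRow_zero]
      simp [shiftEmb_apply, Finset.mem_symmDiff]
    | succ i =>
      rw [Finset.mem_symmDiff, mem_extRow_succ, mem_extRow_succ]
      simp [shiftEmb_apply, Finset.mem_symmDiff]
  rw [h, Finset.card_union_of_disjoint, Finset.card_product, Finset.card_map, Finset.card_singleton,
    one_mul, Nat.cast_add, card_symmDiff_range]
  rw [Finset.disjoint_left]
  rintro ⟨i, j⟩ h1 h2
  simp only [Finset.mem_product, Finset.mem_singleton] at h1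
  obtain ⟨rfl, -⟩ := h1
  simp [shiftEmb_apply] at h2

/-- Lemma 2.2: the recursion for the sums of symmetric differences. -/
theorem sdiff_recursion (k l m : ℕ) (hk : 0 < k) (hl : 0 < l) (hm : 0 < m) :
    (Sdiff k l k m : ℤ) =
      (Sdiff k (l - 1) k m : ℤ) + (Sdiff k l k (m - 1) : ℤ)
        - (Sdiff k (l - 1) k (m - 1) : ℤ)
        + (Sdiff (k - 1) l (k - 1) m : ℤ)
        + |(l : ℤ) - (m : ℤ)| * ((k - 1 + l).choose l : ℤ) * ((k - 1 + m).choose m : ℤ) := by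
  obtain ⟨k, rfl⟩ := Nat.exists_eq_succ_of_ne_zero hk.ne'
  obtain ⟨l, rfl⟩ := Nat.exists_eq_succ_of_ne_zero hl.ne'
  obtain ⟨m, rfl⟩ := Nat.exists_eq_succ_of_ne_zero hm.ne'
  simp only [Nat.succ_eq_add_one, Nat.add_sub_cancel]
  rw [← card_Par, ← card_Par]
  have hE : ∑ S ∈ Par k (l + 1), ∑ T ∈ Par k (m + 1),
      ((symmDiff (extRow (l + 1) S) (extRow (m + 1) T)).card : ℤ)
      = |((l + 1 : ℕ) : ℤ) - ((m + 1 : ℕ) : ℤ)| * ((Par k (l + 1)).card : ℤ)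
          * ((Par k (m + 1)).card : ℤ)
        + ∑ S ∈ Par k (l + 1), ∑ T ∈ Par k (m + 1), ((symmDiff S T).card : ℤ) := by
    simp only [card_symmDiff_extRow, Finset.sum_add_distrib, Finset.sum_const, nsmul_eq_mul]
    ring
  unfold Sdiff
  simp only [Nat.cast_sum]
  simp only [sum_Par k l, sum_Par k m, Finset.sum_add_distrib]
  rw [hE]
  ring
end

section
/- For every positive integer n, the polynomial N_n(t) := N_{nn}(t) is palindromic with total degree n: its coefficient of t^0 vanishes, its coefficient of t^k vanishes for all k ≥ n, and for all 1 ≤ k ≤ n−1 the coefficient of t^k equals the coefficient of t^{n−k}. (Corollary 3.2.) -/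
open Finset

/-- The polynomial `W_{pq}(t) = Σ_{k=0}^{min(p,q)-1} C(p-1,k) C(q-1,k) t^k`. -/
noncomputable def W (p q : ℕ) : Polynomial ℤ :=
  ∑ k ∈ Finset.range (min p q),
    Polynomial.C (((p - 1).choose k : ℤ) * ((q - 1).choose k : ℤ)) * Polynomial.X ^ k

/-- Number of elements of `A` below `j`. -/
def cnt (A : Finset ℕ) (j : ℕ) : ℤ := ((A.filter (· < j)).card : ℤ)

/-- The distance between two finite sets of naturals, via counting functions. -/
def dist1 (n : ℕ) (A B : Finset ℕ) : ℤ :=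
  ∑ j ∈ Finset.range (n + 1), |cnt A j - cnt B j|

/-- Total distance between `m`-subsets of `range p` and of `range q`. -/
def G (n p q m : ℕ) : ℤ :=
  ∑ A ∈ Finset.powersetCard m (Finset.range p),
    ∑ B ∈ Finset.powersetCard m (Finset.range q), dist1 n A B

theorem cnt_insert (A : Finset ℕ) (p j : ℕ) (hp : p ∉ A) :
    cnt (insert p A) j = cnt A j + if p < j then 1 else 0 := by
  unfold cnt
  rw [Finset.filter_insert]
  split_ifs with h
  · rw [Finset.card_insert_of_notMem (by simp [hp])]
    push_cast; rfl
  · simp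

theorem cnt_le (A : Finset ℕ) (j : ℕ) : cnt A j ≤ A.card := by
  unfold cnt
  exact_mod_cast Finset.card_filter_le _ _

theorem cnt_full (A : Finset ℕ) (p j : ℕ) (hA : A ⊆ Finset.range p) (h : p < j) :
    cnt A j = A.card := by
  unfold cnt
  rw [Finset.filter_true_of_mem]
  intro x hx
  have := Finset.mem_range.1 (hA hx)
  omega

theorem sum_ind (n p : ℕ) (hp : p ≤ n) :
    ∑ j ∈ Finset.range (n + 1), (if p < j then (1 : ℤ) else 0) = n - p := by
  induction n, hp using Nat.le_induction with
  | base =>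
    rw [Finset.sum_eq_zero]
    · simp
    · intro x hx
      have := Finset.mem_range.1 hx
      rw [if_neg (by omega)]
  | succ n hn ih =>
    rw [Finset.sum_range_succ, ih, if_pos (by omega)]
    push_cast; ring

theorem sum_abs_ind (n p q : ℕ) (hp : p ≤ n) (hq : q ≤ n) :
    ∑ j ∈ Finset.range (n + 1),
      |(if p < j then (1 : ℤ) else 0) - (if q < j then (1 : ℤ) else 0)| = |(p : ℤ) - q| := by
  rcases le_total p q with h | h
  · have : ∀ j ∈ Finset.range (n + 1),
      |(if p < j then (1 : ℤ) else 0) - (if q < j then (1 : ℤ) else 0)|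
        = (if p < j then (1 : ℤ) else 0) - (if q < j then (1 : ℤ) else 0) := by
      intro j _
      apply abs_of_nonneg
      split_ifs <;> omega
    rw [Finset.sum_congr rfl this, Finset.sum_sub_distrib, sum_ind n p hp, sum_ind n q hq,
      abs_of_nonpos (by omega)]
    ring
  · have : ∀ j ∈ Finset.range (n + 1),
      |(if p < j then (1 : ℤ) else 0) - (if q < j then (1 : ℤ) else 0)|
        = (if q < j then (1 : ℤ) else 0) - (if p < j then (1 : ℤ) else 0) := by
      intro j _
      rw [abs_sub_comm]
      apply abs_of_nonneg
      split_ifs <;> omega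
    rw [Finset.sum_congr rfl this, Finset.sum_sub_distrib, sum_ind n p hp, sum_ind n q hq,
      abs_of_nonneg (by omega)]
    ring

theorem dist1_insert (n p q : ℕ) (hp : p ≤ n) (hq : q ≤ n) (A B : Finset ℕ)
    (hA : A ⊆ Finset.range p) (hB : B ⊆ Finset.range q) (hc : A.card = B.card) :
    dist1 n (insert p A) (insert q B) = dist1 n A B + |(p : ℤ) - q| := by
  unfold dist1
  rw [← sum_abs_ind n p q hp hq, ← Finset.sum_add_distrib]
  apply Finset.sum_congr rfl
  intro j _
  have hpA : p ∉ A := fun h => by simpa using hA h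
  have hqB : q ∉ B := fun h => by simpa using hB h
  rw [cnt_insert A p j hpA, cnt_insert B q j hqB]
  have h1 := cnt_le A j
  have h2 := cnt_le B j
  have h3 := cnt_full A p j hA
  have h4 := cnt_full B q j hB
  rw [hc] at h1 h3
  split_ifs with c d d
  · simp
  · rw [h3 c, abs_of_nonneg (by omega), abs_of_nonneg (by omega)]
    norm_num; ring
  · rw [h4 d, abs_of_nonpos (by omega), abs_of_nonpos (by omega)]
    norm_num; ring
  · simp

theorem sum_psc_succ (p m : ℕ) (f : Finset ℕ → ℤ) :
    ∑ A ∈ Finset.powersetCard (m + 1) (Finset.range (p + 1)), f A =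
      ∑ A ∈ Finset.powersetCard (m + 1) (Finset.range p), f A +
      ∑ A ∈ Finset.powersetCard m (Finset.range p), f (insert p A) := by
  have key : ∀ k, ∀ A ∈ Finset.powersetCard k (Finset.range p), p ∉ A := by
    intro k A hA h
    have := (Finset.mem_powersetCard.1 hA).1 h
    simp at this
  rw [Finset.range_add_one, Finset.powersetCard_succ_insert (by simp), Finset.sum_union,
    Finset.sum_image]
  · intro A hA B hB h
    have h' : (insert p A).erase p = (insert p B).erase p := congrArg (fun s => s.erase p) h
    rwa [Finset.erase_insert (key _ _ hA), Finset.erase_insert (key _ _ hB)] at h'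
  · rw [Finset.disjoint_left]
    intro A hA hA'
    obtain ⟨B, _, rfl⟩ := Finset.mem_image.1 hA'
    exact key _ _ hA (Finset.mem_insert_self _ _)

theorem G_rec (n p q m : ℕ) (hp : p ≤ n) (hq : q ≤ n) :
    G n (p + 1) (q + 1) (m + 1) = G n p (q + 1) (m + 1) + G n (p + 1) q (m + 1)
      - G n p q (m + 1) + G n p q m + |(p : ℤ) - q| * (p.choose m * q.choose m) := by
  have key : ∑ A ∈ Finset.powersetCard m (Finset.range p),
      ∑ B ∈ Finset.powersetCard m (Finset.range q), dist1 n (insert p A) (insert q B)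
      = G n p q m + |(p : ℤ) - q| * (p.choose m * q.choose m) := by
    have : ∀ A ∈ Finset.powersetCard m (Finset.range p),
        ∑ B ∈ Finset.powersetCard m (Finset.range q), dist1 n (insert p A) (insert q B)
        = ∑ B ∈ Finset.powersetCard m (Finset.range q), dist1 n A B
          + q.choose m * |(p : ℤ) - q| := by
      intro A hA
      rw [Finset.mem_powersetCard] at hA
      have : ∀ B ∈ Finset.powersetCard m (Finset.range q), dist1 n (insert p A) (insert q B)
          = dist1 n A B + |(p : ℤ) - q| := by
        intro B hB
        rw [Finset.mem_powersetCard] at hB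
        exact dist1_insert n p q hp hq A B hA.1 hB.1 (hA.2.trans hB.2.symm)
      rw [Finset.sum_congr rfl this, Finset.sum_add_distrib]
      simp
    rw [Finset.sum_congr rfl this, Finset.sum_add_distrib]
    simp [G]
    ring
  unfold G at key ⊢
  simp only [sum_psc_succ, Finset.sum_add_distrib] at key ⊢
  linarith

theorem G_zero (n p q : ℕ) : G n p q 0 = 0 := by
  simp [G, dist1]

theorem G_left (n q m : ℕ) : G n 0 q m = 0 := by
  cases m with
  | zero => exact G_zero _ _ _
  | succ m =>
    have : Finset.powersetCard (m + 1) (Finset.range 0) = ∅ := by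
      rw [Finset.powersetCard_eq_empty]; simp
    simp only [G, this, Finset.sum_empty, Finset.sum_const_zero]

theorem G_right (n p m : ℕ) : G n p 0 m = 0 := by
  cases m with
  | zero => exact G_zero _ _ _
  | succ m =>
    have : Finset.powersetCard (m + 1) (Finset.range 0) = ∅ := by
      rw [Finset.powersetCard_eq_empty]; simp
    simp only [G, this, Finset.sum_empty, Finset.sum_const_zero]

theorem G_big (n p m : ℕ) (h : p ≤ m) : G n p p m = 0 := by
  rcases h.eq_or_lt with rfl | h
  · have : Finset.powersetCard p (Finset.range p) = {Finset.range p} := by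
      have h1 := Finset.powersetCard_self (Finset.range p)
      rwa [Finset.card_range] at h1
    simp [G, this, dist1]
  · have : Finset.powersetCard m (Finset.range p) = ∅ := by
      rw [Finset.powersetCard_eq_empty]; simpa using h
    simp [G, this]

theorem cnt_compl (n : ℕ) (A : Finset ℕ) (hA : A ⊆ Finset.range n) (j : ℕ) :
    cnt (Finset.range n \ A) j = cnt (Finset.range n) j - cnt A j := by
  have h : (Finset.range n \ A).filter (· < j)
      = (Finset.range n).filter (· < j) \ A.filter (· < j) := by
    ext x; simp only [Finset.mem_filter, Finset.mem_sdiff]; tauto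
  unfold cnt
  rw [h, Finset.card_sdiff_of_subset (Finset.filter_subset_filter _ hA),
    Nat.cast_sub (Finset.card_le_card (Finset.filter_subset_filter _ hA))]

theorem sum_compl (n m : ℕ) (hm : m ≤ n) (f : Finset ℕ → ℤ) :
    ∑ A ∈ Finset.powersetCard (n - m) (Finset.range n), f A =
    ∑ A ∈ Finset.powersetCard m (Finset.range n), f (Finset.range n \ A) := by
  symm
  apply Finset.sum_nbij' (fun A => Finset.range n \ A) (fun A => Finset.range n \ A)
  · intro A hA
    rw [Finset.mem_powersetCard] at hA ⊢
    refine ⟨Finset.sdiff_subset, ?_⟩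
    rw [Finset.card_sdiff_of_subset hA.1, hA.2, Finset.card_range]
  · intro A hA
    rw [Finset.mem_powersetCard] at hA ⊢
    refine ⟨Finset.sdiff_subset, ?_⟩
    rw [Finset.card_sdiff_of_subset hA.1, hA.2, Finset.card_range]
    omega
  · intro A hA
    exact Finset.sdiff_sdiff_eq_self (Finset.mem_powersetCard.1 hA).1
  · intro A hA
    exact Finset.sdiff_sdiff_eq_self (Finset.mem_powersetCard.1 hA).1
  · intro A hA
    rfl

theorem G_symm (k n m : ℕ) (hm : m ≤ n) : G k n n m = G k n n (n - m) := by
  unfold G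
  simp only [sum_compl n m hm]
  apply Finset.sum_congr rfl
  intro A hA
  apply Finset.sum_congr rfl
  intro B hB
  unfold dist1
  apply Finset.sum_congr rfl
  intro j _
  rw [cnt_compl n A (Finset.mem_powersetCard.1 hA).1,
    cnt_compl n B (Finset.mem_powersetCard.1 hB).1, abs_sub_comm]
  congr 1
  ring

theorem W_coeff (p q m : ℕ) :
    (W (p + 1) (q + 1)).coeff m = (p.choose m : ℤ) * q.choose m := by
  unfold W
  simp only [Polynomial.finsetSum_coeff, Polynomial.coeff_C_mul, Polynomial.coeff_X_pow]
  simp only [Nat.add_sub_cancel, mul_ite, mul_one, mul_zero, Finset.sum_ite_eq, Finset.mem_range]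
  split_ifs with h
  · rfl
  · have : p < m ∨ q < m := by omega
    rcases this with h | h <;> simp [Nat.choose_eq_zero_of_lt h]

theorem N_coeff (N : ℕ → ℕ → Polynomial ℤ)
    (h0q : ∀ q, N 0 q = 0) (hp0 : ∀ p, N p 0 = 0) (h11 : N 1 1 = 0)
    (hrec : ∀ p q : ℕ, 1 ≤ p → 1 ≤ q → ¬(p = 1 ∧ q = 1) →
      N p q = N (p - 1) q + N p (q - 1) - (1 - Polynomial.X) * N (p - 1) (q - 1)
        + Polynomial.C (|(p : ℤ) - (q : ℤ)|) * Polynomial.X * W p q)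
    (n : ℕ) : ∀ p q : ℕ, p ≤ n → q ≤ n → ∀ m, (N p q).coeff m = G n p q m := by
  have hr : ∀ p q : ℕ, N (p + 1) (q + 1) = N p (q + 1) + N (p + 1) q
      - (N p q - Polynomial.X * N p q)
        + Polynomial.C (|(p : ℤ) - (q : ℤ)|) * (Polynomial.X * W (p + 1) (q + 1)) := by
    intro p q
    by_cases h : p + 1 = 1 ∧ q + 1 = 1
    · obtain ⟨hp, hq⟩ := h
      obtain rfl : p = 0 := by omega
      obtain rfl : q = 0 := by omega
      simp [h0q, hp0, h11]
    · have := hrec (p + 1) (q + 1) (by omega) (by omega) h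
      rw [this]
      have e : ((p + 1 : ℕ) : ℤ) - ((q + 1 : ℕ) : ℤ) = (p : ℤ) - q := by push_cast; ring
      rw [e]
      simp only [Nat.add_sub_cancel]
      ring
  intro p
  induction p with
  | zero => intro q _ _ m; rw [h0q, G_left]; simp
  | succ p ihp =>
    intro q
    induction q with
    | zero => intro _ _ m; rw [hp0, G_right]; simp
    | succ q ihq =>
      intro hp hq m
      rw [hr]
      cases m with
      | zero =>
        simp only [Polynomial.coeff_add, Polynomial.coeff_sub, Polynomial.coeff_C_mul,
          Polynomial.coeff_X_mul_zero]
        rw [ihp (q + 1) (by omega) hq, ihq hp (by omega), ihp q (by omega) (by omega)]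
        simp [G_zero]
      | succ m =>
        simp only [Polynomial.coeff_add, Polynomial.coeff_sub, Polynomial.coeff_C_mul,
          Polynomial.coeff_X_mul, W_coeff]
        rw [ihp (q + 1) (by omega) hq, ihq hp (by omega), ihp q (by omega) (by omega),
          ihp q (by omega) (by omega), G_rec n p q m (by omega) (by omega)]
        ring

/-- Corollary 3.2: for every positive integer `n`, the polynomial `N_n(t) = N_{nn}(t)`
is palindromic with total degree `n`: its constant coefficient vanishes, its coefficients
in degrees `≥ n` vanish, and the coefficient of `t^k` equals that of `t^(n-k)` for
`1 ≤ k ≤ n-1`. -/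
theorem Nn_palindromic (N : ℕ → ℕ → Polynomial ℤ)
    (h0q : ∀ q, N 0 q = 0) (hp0 : ∀ p, N p 0 = 0) (h11 : N 1 1 = 0)
    (hrec : ∀ p q : ℕ, 1 ≤ p → 1 ≤ q → ¬(p = 1 ∧ q = 1) →
      N p q = N (p - 1) q + N p (q - 1) - (1 - Polynomial.X) * N (p - 1) (q - 1)
        + Polynomial.C (|(p : ℤ) - (q : ℤ)|) * Polynomial.X * W p q)
    (n : ℕ) (hn : 1 ≤ n) :
    (N n n).coeff 0 = 0 ∧
    (∀ k : ℕ, n ≤ k → (N n n).coeff k = 0) ∧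
    (∀ k : ℕ, 1 ≤ k → k ≤ n - 1 → (N n n).coeff k = (N n n).coeff (n - k)) := by
  have h := N_coeff N h0q hp0 h11 hrec n n n le_rfl le_rfl
  simp only [h]
  exact ⟨G_zero n n n, fun k hk => G_big n n k hk, fun k _ hk => G_symm n n k (by omega)⟩
end

section
/- For every positive integer n and every integer k with 1 ≤ k ≤ n−1, the coefficient of t^k in N_n(t) := N_{nn}(t) equals k(n−k)·C(2n+2, 2k+1)/(4n+2); equivalently, (4n+2) times the coefficient of t^k in N_n(t) equals k(n−k)·C(2n+2, 2k+1). (Theorem 4.1, explicit coefficient formula.) -/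
open Finset

lemma ps_two_ne : (2 : PowerSeries (Polynomial ℤ)) ≠ 0 := by
  intro h
  have h' := congrArg PowerSeries.constantCoeff h
  rw [map_ofNat, map_zero] at h'
  exact two_ne_zero h'

open PowerSeries in
/-- Uniqueness for the half-plane system. -/
lemma half_unique (c : PowerSeries (Polynomial ℤ)) (hc : constantCoeff c = 1)
    (F : ℕ → PowerSeries (Polynomial ℤ))
    (hF : ∀ d, c * F (d + 1) = F d + X * F (d + 2))
    (G : PowerSeries (Polynomial ℤ))
    (h0 : c * F 0 = X * G)
    (hG : ∀ n, (∀ d, coeff n (F d) = 0) → coeff n G = 0) : ∀ d, F d = 0 := by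
  have key : ∀ n, ∀ m, m ≤ n → ∀ d, coeff m (F d) = 0 := by
    have hcoef : ∀ n d, (∀ m, m < n → ∀ d, coeff m (F d) = 0) →
        coeff n (c * F d) = coeff n (F d) := by
      intro n d h
      rw [coeff_mul, Finset.sum_eq_single (0, n)]
      · simp [hc]
      · rintro ⟨i, j⟩ hij hne
        have hij' := Finset.HasAntidiagonal.mem_antidiagonal.1 hij
        simp only at hij'
        have : j < n := by
          rcases Nat.eq_zero_or_pos i with hi | hi
          · exfalso; apply hne; subst hi; simp at hij'; simp [hij']
          · omega
        simp [h j this d]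
      · intro h; simp at h
    have step : ∀ n, (∀ m, m < n → ∀ d, coeff m (F d) = 0) → ∀ d, coeff n (F d) = 0 := by
      intro n h d
      induction d with
      | zero =>
        rw [← hcoef n 0 h, h0]
        cases n with
        | zero => simp
        | succ n =>
          rw [coeff_succ_X_mul]
          exact hG n (h n (Nat.lt_succ_self n))
      | succ d ih =>
        rw [← hcoef n (d+1) h, hF, map_add, ih]
        cases n with
        | zero => simp
        | succ n =>
          rw [coeff_succ_X_mul, h n (Nat.lt_succ_self n)]; simp
    intro n
    induction n with
    | zero =>
      intro m hm d
      exact step m (by intro m' h; omega) d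
    | succ n ih =>
      intro m hm d
      exact step m (fun m' h d => ih m' (by omega) d) d
  intro d
  ext1 n
  simpa using key n n le_rfl d

lemma W_coeff_s5 (a b k : ℕ) :
    (W (a + 1) (b + 1)).coeff k = (a.choose k : ℤ) * (b.choose k : ℤ) := by
  unfold W
  simp only [Polynomial.finsetSum_coeff, Polynomial.coeff_C_mul, Polynomial.coeff_X_pow]
  simp only [mul_ite, mul_one, mul_zero, Finset.sum_ite_eq, Nat.add_sub_cancel]
  split_ifs with h
  · rfl
  · simp only [Finset.mem_range, lt_min_iff, not_and_or] at h
    rcases h with h | h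
    · rw [Nat.choose_eq_zero_of_lt (n := a) (by omega)]; simp
    · rw [Nat.choose_eq_zero_of_lt (n := b) (by omega)]; simp

lemma W_zero (a : ℕ) : W (a + 1) 1 = 1 := by
  simp [W]

lemma W_symm (a b : ℕ) : W (a + 1) (b + 1) = W (b + 1) (a + 1) := by
  ext k; rw [W_coeff_s5, W_coeff_s5, mul_comm]

lemma W_rec (a b : ℕ) : W (a + 2) (b + 2) =
    W (a + 1) (b + 2) + W (a + 2) (b + 1) - (1 - Polynomial.X) * W (a + 1) (b + 1) := by
  ext k
  have e : (1 - Polynomial.X) * W (a + 1) (b + 1)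
    = W (a + 1) (b + 1) - Polynomial.X * W (a + 1) (b + 1) := by ring
  rw [e]
  simp only [Polynomial.coeff_sub, Polynomial.coeff_add]
  rw [W_coeff_s5 (a+1) (b+1), W_coeff_s5 a (b+1), W_coeff_s5 (a+1) b, W_coeff_s5]
  cases k with
  | zero => simp
  | succ k =>
    rw [Polynomial.coeff_X_mul, W_coeff_s5]
    simp only [Nat.choose_succ_succ]
    push_cast
    ring

/-- Pair of polynomials with `(1+s)^(2n) = e + s o`, `s^2 = t`. -/
noncomputable def eo : ℕ → Polynomial ℤ × Polynomial ℤ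
  | 0 => (1, 0)
  | n + 1 => ((1 + Polynomial.X) * (eo n).1 + 2 * Polynomial.X * (eo n).2,
      2 * (eo n).1 + (1 + Polynomial.X) * (eo n).2)

lemma eo_coeff (n : ℕ) : ∀ k, (eo n).1.coeff k = ((2 * n).choose (2 * k) : ℤ) ∧
    (eo n).2.coeff k = ((2 * n).choose (2 * k + 1) : ℤ) := by
  induction n with
  | zero =>
    intro k
    cases k with
    | zero => simp [eo]
    | succ k => simp [eo, Polynomial.coeff_one, Nat.mul_add, Nat.choose]
  | succ n ih =>
    intro k
    have e1 : (eo (n+1)).1 = (eo n).1 + Polynomial.X * (eo n).1 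
        + Polynomial.X * ((eo n).2 + (eo n).2) := by
      simp only [eo]; ring
    have e2 : (eo (n+1)).2 = (eo n).1 + (eo n).1 + (eo n).2 + Polynomial.X * (eo n).2 := by
      simp only [eo]; ring
    rw [e1, e2]
    simp only [Polynomial.coeff_add]
    cases k with
    | zero =>
      simp only [Polynomial.coeff_X_mul_zero, (ih 0).1, (ih 0).2]
      simp
      ring
    | succ k =>
      simp only [Polynomial.coeff_X_mul, Polynomial.coeff_add, (ih k).1, (ih k).2,
        (ih (k+1)).1, (ih (k+1)).2, Nat.mul_add, mul_one]
      have : ∀ a b, Nat.choose (a+2) (b+2) = a.choose b + 2 * a.choose (b+1) + a.choose (b+2) := by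
        intro a b; simp only [Nat.choose_succ_succ]; ring
      have h3 : ∀ b, b + 2 + 1 = b + 1 + 2 := by intro b; rfl
      simp only [this, h3]
      push_cast
      constructor <;> ring

open PowerSeries in
lemma ogf : (((1 + C (1 - Polynomial.X) * X)^2 - 4 * X) : PowerSeries (Polynomial ℤ)) *
    PowerSeries.mk (fun n => (eo (n + 1)).2) = 2 := by
  have e : (((1 + C (1 - Polynomial.X) * X)^2 - 4 * X) : PowerSeries (Polynomial ℤ)) *
    PowerSeries.mk (fun n => (eo (n + 1)).2) = PowerSeries.mk (fun n => (eo (n + 1)).2)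
      + X * (C (2 * (1 - Polynomial.X) - 4) * PowerSeries.mk (fun n => (eo (n + 1)).2)
       + X * (C ((1 - Polynomial.X)^2) * PowerSeries.mk (fun n => (eo (n + 1)).2))) := by
    simp only [map_sub, map_mul, map_pow, map_one, map_ofNat]
    ring
  rw [e]
  ext1 n
  rcases n with _ | _ | n
  · have : constantCoeff (2 : PowerSeries (Polynomial ℤ)) = 2 := map_ofNat _ 2
    simp [eo, this]
  · rw [map_add, coeff_succ_X_mul]
    have : coeff (0+1) (2 : PowerSeries (Polynomial ℤ)) = 0 := by
      rw [← map_ofNat (C : Polynomial ℤ →+* _) 2, coeff_C]; simp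
    rw [this]
    simp [eo]; ring
  · have : coeff (n+1+1) (2 : PowerSeries (Polynomial ℤ)) = 0 := by
      rw [← map_ofNat (C : Polynomial ℤ →+* _) 2, coeff_C]; simp
    rw [this, map_add, coeff_succ_X_mul, map_add, coeff_succ_X_mul, coeff_C_mul, coeff_C_mul]
    simp only [coeff_mk, eo]
    ring

open PowerSeries in
lemma qgf : (((1 + C (1 - Polynomial.X) * X)^2 - 4 * X) : PowerSeries (Polynomial ℤ)) *
    PowerSeries.mk (fun n => (2 * (n : Polynomial ℤ) + 2) * (eo n).1 - (eo (n + 1)).2) =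
    8 * C Polynomial.X * X ^ 2 * PowerSeries.mk (fun n => (eo (n + 1)).2) := by
  set Q := PowerSeries.mk (fun n => (2 * (n : Polynomial ℤ) + 2) * (eo n).1 - (eo (n + 1)).2)
    with hQ
  have e : (((1 + C (1 - Polynomial.X) * X)^2 - 4 * X) : PowerSeries (Polynomial ℤ)) * Q = Q
      + X * (C (2 * (1 - Polynomial.X) - 4) * Q
       + X * (C ((1 - Polynomial.X)^2) * Q)) := by
    simp only [map_sub, map_mul, map_pow, map_one, map_ofNat]
    ring
  have e2 : 8 * C Polynomial.X * X ^ 2 * PowerSeries.mk (fun n => (eo (n + 1)).2) 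
     = X * (X * (C (8 * Polynomial.X) * PowerSeries.mk (fun n => (eo (n + 1)).2))) := by
    simp only [map_mul, map_ofNat]
    ring
  rw [e, e2]
  ext1 n
  rcases n with _ | _ | n
  · simp [eo, hQ]
  · rw [map_add, coeff_succ_X_mul, coeff_succ_X_mul]
    simp [eo, hQ]; ring
  · rw [map_add, coeff_succ_X_mul, map_add, coeff_succ_X_mul, coeff_C_mul, coeff_C_mul,
      coeff_succ_X_mul, coeff_succ_X_mul, coeff_C_mul]
    simp only [hQ, coeff_mk, eo]
    push_cast
    ring

lemma N_symm (N : ℕ → ℕ → Polynomial ℤ)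
    (h0q : ∀ q, N 0 q = 0) (hp0 : ∀ p, N p 0 = 0)
    (hrec : ∀ p q : ℕ, 1 ≤ p → 1 ≤ q → ¬(p = 1 ∧ q = 1) →
      N p q = N (p - 1) q + N p (q - 1) - (1 - Polynomial.X) * N (p - 1) (q - 1)
        + Polynomial.C (|(p : ℤ) - (q : ℤ)|) * Polynomial.X * W p q) :
    ∀ s p q, p + q ≤ s → N p q = N q p := by
  intro s
  induction s with
  | zero =>
    intro p q h
    obtain ⟨rfl, rfl⟩ : p = 0 ∧ q = 0 := by omega
    rfl
  | succ s ih =>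
    intro p q h
    rcases p with _ | p
    · rw [h0q, hp0]
    rcases q with _ | q
    · rw [h0q, hp0]
    by_cases h1 : p = 0 ∧ q = 0
    · rw [h1.1, h1.2]
    rw [hrec (p+1) (q+1) (by omega) (by omega) (by omega),
      hrec (q+1) (p+1) (by omega) (by omega) (by omega), W_symm, abs_sub_comm]
    simp only [Nat.add_sub_cancel]
    rw [ih p (q+1) (by omega), ih (p+1) q (by omega), ih p q (by omega)]
    ring

open PowerSeries in
lemma diag_gf (N : ℕ → ℕ → Polynomial ℤ)
    (h0q : ∀ q, N 0 q = 0) (hp0 : ∀ p, N p 0 = 0) (h11 : N 1 1 = 0)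
    (hrec : ∀ p q : ℕ, 1 ≤ p → 1 ≤ q → ¬(p = 1 ∧ q = 1) →
      N p q = N (p - 1) q + N p (q - 1) - (1 - Polynomial.X) * N (p - 1) (q - 1)
        + Polynomial.C (|(p : ℤ) - (q : ℤ)|) * Polynomial.X * W p q) :
    (((1 + C (1 - Polynomial.X) * X)^2 - 4 * X) : PowerSeries (Polynomial ℤ)) ^ 2 *
      PowerSeries.mk (fun n => N n n) = 2 * C Polynomial.X * X ^ 2 := by
  obtain ⟨c, hc⟩ : ∃ c : PowerSeries (Polynomial ℤ), c = 1 + C (1 - Polynomial.X) * X := ⟨_, rfl⟩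
  obtain ⟨t, ht⟩ : ∃ t : PowerSeries (Polynomial ℤ), t = C Polynomial.X := ⟨_, rfl⟩
  have hcc : constantCoeff c = 1 := by simp [hc]
  have hmulc : ∀ A : PowerSeries (Polynomial ℤ),
      c * A = A + X * (C (1 - Polynomial.X) * A) := by intro A; rw [hc]; ring
  obtain ⟨V, hV⟩ : ∃ V : ℕ → PowerSeries (Polynomial ℤ),
    V = fun d => PowerSeries.mk (fun n => W (n + d + 1) (n + 1)) := ⟨_, rfl⟩
  obtain ⟨M, hM⟩ : ∃ M : ℕ → PowerSeries (Polynomial ℤ),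
    M = fun d => PowerSeries.mk (fun n => N (n + d) n) := ⟨_, rfl⟩
  have hM0 : PowerSeries.mk (fun n => N n n) = M 0 := by rw [hM]; simp
  have hVr : ∀ d, c * V (d + 1) = V d + X * V (d + 2) := by
    intro d
    rw [hmulc]
    ext1 n
    rcases n with _ | n
    · simp [hV, W_zero]
    · simp only [map_add, coeff_succ_X_mul, coeff_C_mul, hV, coeff_mk]
      have := W_rec (n + d + 1) n
      rw [show n + 1 + (d + 1) + 1 = n + d + 1 + 2 by ring,
        show n + (d + 1) + 1 = n + d + 1 + 1 by ring,
        show n + 1 + d + 1 = n + d + 1 + 1 by ring,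
        show n + (d + 2) + 1 = n + d + 1 + 2 by ring, this]
      ring
  have hV0 : c * V 0 = 1 + 2 * X * V 1 := by
    rw [hmulc, show (2 : PowerSeries (Polynomial ℤ)) * X * V 1 = X * (V 1 + V 1) by ring]
    ext1 n
    rcases n with _ | n
    · simp [hV, W_zero]
    · have h1 : coeff (n+1) (1 : PowerSeries (Polynomial ℤ)) = 0 := by
        rw [coeff_one]; simp
      simp only [map_add, coeff_succ_X_mul, coeff_C_mul, hV, coeff_mk, h1]
      have := W_rec n n
      rw [W_symm n (n+1)] at this
      simp only [add_zero]
      rw [this]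
      ring
  have hMr : ∀ d, c * M (d + 1) = M d + X * M (d + 2) + ((d : PowerSeries (Polynomial ℤ)) + 1) * t * X * V (d + 1) := by
    intro d
    rw [hmulc, show ((d : PowerSeries (Polynomial ℤ)) + 1) * t * X * V (d + 1) =
      X * (C (((d : Polynomial ℤ) + 1) * Polynomial.X) * V (d + 1)) by
        rw [ht]; simp only [map_mul, map_add, map_natCast, map_one]; ring]
    ext1 n
    rcases n with _ | n
    · simp [hM, hp0]
    · simp only [map_add, coeff_succ_X_mul, coeff_C_mul, hV, hM, coeff_mk]
      have := hrec (n + 1 + (d + 1)) (n + 1) (by omega) (by omega) (by omega)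
      have habs : |((n + 1 + (d + 1) : ℕ) : ℤ) - ((n + 1 : ℕ) : ℤ)| = (d : ℤ) + 1 := by
        push_cast
        rw [abs_of_nonneg] <;> [ring; (ring_nf; positivity)]
      rw [habs] at this
      have hC : Polynomial.C ((d : ℤ) + 1) = (d : Polynomial ℤ) + 1 := by simp
      rw [hC] at this
      rw [this]
      rw [show n + 1 + (d + 1) - 1 = n + 1 + d by omega, show n + 1 - 1 = n by omega,
        show n + 1 + (d + 1) = n + (d + 2) by ring, show n + 1 + d = n + (d + 1) by ring,
        show n + (d + 1) + 1 = n + (d + 2) by ring]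
      ring
  have hMz : c * M 0 = X * (2 * M 1) := by
    rw [hmulc, two_mul]
    ext1 n
    rcases n with _ | n
    · simp [hM, hp0]
    · simp only [map_add, coeff_succ_X_mul, coeff_C_mul, hM, coeff_mk, add_zero]
      rcases n with _ | n
      · simp [hp0, h11]
      · have := hrec (n + 1 + 1) (n + 1 + 1) (by omega) (by omega) (by omega)
        simp only [Nat.add_sub_cancel, sub_self, abs_zero, map_zero, zero_mul, add_zero] at this
        rw [N_symm N h0q hp0 hrec _ (n+1) (n+1+1) le_rfl] at this
        rw [this]; ring
  -- P and ρ
  have hPc : constantCoeff (V 0) = 1 := by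
    rw [← coeff_zero_eq_constantCoeff_apply]; simp [hV, W_zero]
  have hPu : IsUnit (V 0) := by
    rw [PowerSeries.isUnit_iff_constantCoeff, hPc]; exact isUnit_one
  obtain ⟨r, hr⟩ : ∃ r, V 1 = V 0 * r := hPu.dvd
  have hPne : V 0 ≠ 0 := hPu.ne_zero
  have hprod : ∀ d, V (d + 1) * V 0 - V d * V 1 = 0 := by
    apply half_unique c hcc (fun d => V (d + 1) * V 0 - V d * V 1) _ 0
    · simp only [zero_add]; ring
    · intro n _; simp
    · intro d
      linear_combination V 0 * hVr (d + 1) - V 1 * hVr d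
  have hstep : ∀ d, V (d + 1) = V d * r := by
    intro d
    apply mul_right_cancel₀ hPne
    linear_combination hprod d + V d * hr
  obtain ⟨P, hP⟩ : ∃ P, P = V 0 := ⟨_, rfl⟩
  have hpow : ∀ d, V d = P * r ^ d := by
    intro d
    induction d with
    | zero => simp [hP]
    | succ d ih => rw [hstep, ih]; ring
  rw [← hP] at hPne
  have h2 : c * r = 1 + X * r ^ 2 := by
    apply mul_left_cancel₀ hPne
    have := hVr 0
    rw [hpow, hpow, hpow] at this
    linear_combination this
  have h3 : P * (c - 2 * X * r) = 1 := by
    have := hV0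
    rw [hpow, hpow] at this
    linear_combination this
  have h1 : P * (1 - X * r ^ 2) = r := by
    linear_combination r * h3 - P * h2
  have hD : P ^ 2 * (c ^ 2 - 4 * X) = 1 := by
    have : P ^ 2 * (c - 2 * X * r) ^ 2 = 1 := by rw [← mul_pow, h3, one_pow]
    linear_combination this + 4 * X * P ^ 2 * h2
  have hmain : ∀ d : ℕ, 2 * M d - t * X * P ^ 2 * r ^ d *
      (4 * X * P ^ 2 + c * P * (d : PowerSeries (Polynomial ℤ)) + (d : PowerSeries (Polynomial ℤ)) ^ 2) = 0 := by
    let F : ℕ → PowerSeries (Polynomial ℤ) := fun d => 2 * M d - t * X * P ^ 2 * r ^ d *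
      (4 * X * P ^ 2 + c * P * (d : PowerSeries (Polynomial ℤ)) + (d : PowerSeries (Polynomial ℤ)) ^ 2)
    apply half_unique c hcc F _ (2 * F 1)
    · simp only [F]
      push_cast
      have h4 : 4 * X * P ^ 2 = c ^ 2 * P ^ 2 - 1 := by linear_combination -hD
      have h5 : 2 * X * r * P = c * P - 1 := by linear_combination -h3
      have : c * (4 * X * P ^ 2) * P = 2 * X * r * (4 * X * P ^ 2 + c * P + 1) * P := by
        rw [h4]
        linear_combination (-(c ^ 2 * P ^ 2 + c * P)) * h5
      linear_combination 2 * hMz - t * X * P * this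
    · intro n h
      rw [two_mul, map_add, h 1, add_zero]
    · intro d
      simp only [F]
      have := hMr d
      rw [hpow] at this
      push_cast
      linear_combination 2 * this - t * X * r ^ d * (P ^ 2 * (4 * X * P ^ 2 + c * P * (d + 1) + (d + 1) ^ 2) * h2
        + P ^ 2 * c * h1 + P ^ 2 * h2 + (2 * d + 2) * P * h1)
  have h0 := hmain 0
  rw [hM0, ← hc, ← ht]
  have two_ne : (2 : PowerSeries (Polynomial ℤ)) ≠ 0 := ps_two_ne
  apply mul_left_cancel₀ two_ne
  have hD2 : P ^ 4 * (c ^ 2 - 4 * X) ^ 2 = 1 := by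
    calc P ^ 4 * (c ^ 2 - 4 * X) ^ 2 = (P ^ 2 * (c ^ 2 - 4 * X)) ^ 2 := by ring
      _ = 1 := by rw [hD, one_pow]
  simp only [Nat.cast_zero, pow_zero] at h0
  linear_combination (c ^ 2 - 4 * X) ^ 2 * h0 + 4 * t * X ^ 2 * hD2

/-- Theorem 4.1 (explicit coefficient formula): for `1 ≤ k ≤ n-1`, `(4n+2)` times the
coefficient of `t^k` in `N_n(t) = N_{nn}(t)` equals `k(n-k)·C(2n+2, 2k+1)`. -/
theorem Nn_coeff_formula (N : ℕ → ℕ → Polynomial ℤ)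
    (h0q : ∀ q, N 0 q = 0) (hp0 : ∀ p, N p 0 = 0) (h11 : N 1 1 = 0)
    (hrec : ∀ p q : ℕ, 1 ≤ p → 1 ≤ q → ¬(p = 1 ∧ q = 1) →
      N p q = N (p - 1) q + N p (q - 1) - (1 - Polynomial.X) * N (p - 1) (q - 1)
        + Polynomial.C (|(p : ℤ) - (q : ℤ)|) * Polynomial.X * W p q)
    (n : ℕ) (hn : 1 ≤ n) (k : ℕ) (hk1 : 1 ≤ k) (hk2 : k ≤ n - 1) :
    (4 * (n : ℤ) + 2) * (N n n).coeff k
      = (k : ℤ) * ((n : ℤ) - (k : ℤ)) * ((2 * n + 2).choose (2 * k + 1) : ℤ) := by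
  have h1 := diag_gf N h0q hp0 h11 hrec
  have h2 := qgf
  have h3 := ogf
  generalize ((1 + PowerSeries.C (1 - Polynomial.X) * PowerSeries.X) ^ 2 - 4 * PowerSeries.X :
    PowerSeries (Polynomial ℤ)) = D at h1 h2 h3
  have hD : D ≠ 0 := by
    rintro rfl
    rw [zero_mul] at h3
    exact ps_two_ne h3.symm
  have h4 : PowerSeries.mk (fun n => (2 * (n : Polynomial ℤ) + 2) * (eo n).1 - (eo (n + 1)).2)
      = 8 * PowerSeries.mk (fun n => N n n) := by
    apply mul_left_cancel₀ (pow_ne_zero 2 hD)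
    linear_combination D * h2 + 8 * PowerSeries.C Polynomial.X * PowerSeries.X ^ 2 * h3 - 8 * h1
  have h5 := congrArg (PowerSeries.coeff n) h4
  rw [← map_ofNat (PowerSeries.C : Polynomial ℤ →+* _) 8, PowerSeries.coeff_C_mul,
    PowerSeries.coeff_mk, PowerSeries.coeff_mk] at h5
  have h6 := congrArg (fun p => Polynomial.coeff p k) h5
  rw [← map_ofNat (Polynomial.C : ℤ →+* _) 8, Polynomial.coeff_C_mul, Polynomial.coeff_sub,
    show (2 * (n : Polynomial ℤ) + 2) = Polynomial.C (2 * (n : ℤ) + 2) by simp,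
    Polynomial.coeff_C_mul, (eo_coeff n k).1, (eo_coeff (n + 1) k).2] at h6
  have h7 := Nat.add_one_mul_choose_eq (2 * n + 1) (2 * k)
  have h8 := Nat.choose_mul_succ_eq (2 * n) (2 * k)
  obtain ⟨j, rfl⟩ : ∃ j, n = k + j := ⟨n - k, by omega⟩
  rw [show 2 * (k + j) + 1 - 2 * k = 2 * j + 1 by omega] at h8
  zify at h7 h8
  rw [show 2 * (k + j + 1) = 2 * (k + j) + 2 by ring] at h6
  rw [show 2 * (k + j) + 1 + 1 = 2 * (k + j) + 2 by ring] at h7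
  push_cast at h6 h7 h8 ⊢
  have e8 : (8 : ℤ) ≠ 0 := by norm_num
  apply mul_left_cancel₀ e8
  linear_combination (-(4 * ((k : ℤ) + j) + 2)) * h6 + 2 * (2 * j + 1) * h7
    + 2 * (2 * ((k : ℤ) + j) + 2) * h8
end

section
/- For all nonnegative integers s and all positive integers n, the sum of EMD(α, β) over all ordered pairs (α, β) ∈ C(s,n) × C(s,n) equals S⊖(s, n−1 | s, n−1), the sum of |λ ⊖ μ| over all ordered pairs (λ, μ) of Young diagrams in Par(s×(n−1)). (Equation (4.4), via the bijection between compositions and bounded Young diagrams.) -/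
open Finset

/-- The one-dimensional earth mover's distance between two weak compositions
`α, β` of the same number `s` into `n` parts:
`EMD(α,β) = Σ_{j=1}^n |Σ_{i=1}^j (α_i - β_i)|`. -/
def EMD {n : ℕ} (α β : Fin n → ℕ) : ℕ :=
  ∑ j : Fin n, (∑ i ∈ Finset.univ.filter (fun i : Fin n => i ≤ j),
      ((α i : ℤ) - (β i : ℤ))).natAbs


/-- Tail sums of a composition. -/
def tailSum {n : ℕ} (α : Fin n → ℕ) (k : ℕ) : ℕ :=
  ∑ i ∈ Finset.univ.filter (fun i : Fin n => k ≤ i.val), α i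

/-- The Young diagram attached to a composition. -/
def cdiag (s m : ℕ) (α : Fin (m + 1) → ℕ) : Finset (ℕ × ℕ) :=
  (Finset.range s ×ˢ Finset.range m).filter (fun p => p.1 < tailSum α (p.2 + 1))

theorem tailSum_zero {n : ℕ} (α : Fin n → ℕ) : tailSum α 0 = ∑ i, α i := by
  simp [tailSum]

theorem tailSum_anti {n : ℕ} (α : Fin n → ℕ) {a b : ℕ} (h : a ≤ b) :
    tailSum α b ≤ tailSum α a := by
  unfold tailSum
  apply Finset.sum_le_sum_of_subset
  intro i
  simp only [Finset.mem_filter, Finset.mem_univ, true_and]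
  omega

theorem tailSum_ge {n : ℕ} (α : Fin n → ℕ) {k : ℕ} (h : n ≤ k) : tailSum α k = 0 := by
  unfold tailSum
  apply Finset.sum_eq_zero
  intro i
  simp only [Finset.mem_filter, Finset.mem_univ, true_and]
  omega

theorem tailSum_succ {n : ℕ} (α : Fin n → ℕ) (i : Fin n) :
    tailSum α i.val = α i + tailSum α (i.val + 1) := by
  unfold tailSum
  have : Finset.univ.filter (fun x : Fin n => i.val ≤ x.val)
      = insert i (Finset.univ.filter (fun x : Fin n => i.val + 1 ≤ x.val)) := by
    ext x
    simp only [Finset.mem_filter, Finset.mem_univ, true_and, Finset.mem_insert, Fin.ext_iff]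
    omega
  rw [this, Finset.sum_insert (by simp)]

theorem tailSum_tele {n : ℕ} (e : ℕ → ℕ) (he : Antitone e) (h0 : e n = 0) (k : ℕ) (hk : k ≤ n) :
    tailSum (fun i : Fin n => e i.val - e (i.val + 1)) k = e k := by
  induction hk using Nat.decreasingInduction with
  | self => rw [tailSum_ge _ le_rfl, h0]
  | of_succ k hk ih =>
    have := tailSum_succ (fun i : Fin n => e i.val - e (i.val + 1)) ⟨k, hk⟩
    simp only at this
    rw [this, ih]
    have := he (Nat.le_succ k)
    simp only [Nat.succ_eq_add_one] at this
    omega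

theorem prefix_eq {n : ℕ} (α β : Fin n → ℕ) (h : ∑ i, α i = ∑ i, β i) (j : Fin n) :
    (∑ i ∈ Finset.univ.filter (fun i : Fin n => i ≤ j), ((α i : ℤ) - (β i : ℤ)))
      = (tailSum β (j.val + 1) : ℤ) - tailSum α (j.val + 1) := by
  have h1 := Finset.sum_filter_add_sum_filter_not Finset.univ (fun i : Fin n => i ≤ j)
    (fun i => (α i : ℤ) - (β i : ℤ))
  have h2 : Finset.univ.filter (fun i : Fin n => ¬ i ≤ j)
      = Finset.univ.filter (fun i : Fin n => j.val + 1 ≤ i.val) := by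
    ext x
    simp only [Finset.mem_filter, Finset.mem_univ, true_and, Fin.le_def]
    omega
  have h3 : ∑ i, ((α i : ℤ) - (β i : ℤ)) = 0 := by
    rw [Finset.sum_sub_distrib, sub_eq_zero]
    exact_mod_cast h
  rw [h2, h3, Finset.sum_sub_distrib (s := Finset.univ.filter (fun i : Fin n => j.val + 1 ≤ i.val))] at h1
  unfold tailSum
  push_cast
  linarith

theorem card_diag {s m : ℕ} (α β : Fin (m + 1) → ℕ) (ha : ∑ i, α i = s) (hb : ∑ i, β i = s) :
    EMD α β = (symmDiff (cdiag s m α) (cdiag s m β)).card := by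
  have hle : ∀ γ : Fin (m + 1) → ℕ, ∑ i, γ i = s → ∀ k, tailSum γ k ≤ s := by
    intro γ h k
    rw [← h, ← tailSum_zero]
    exact tailSum_anti _ (Nat.zero_le k)
  unfold EMD
  rw [Finset.card_eq_sum_card_fiberwise (f := Prod.snd) (t := Finset.range m)]
  · rw [Fin.sum_univ_castSucc, Finset.sum_range]
    simp only [prefix_eq α β (ha.trans hb.symm)]
    rw [tailSum_ge β (by simp), tailSum_ge α (by simp)]
    simp only [sub_self, Int.natAbs_zero, add_zero]
    refine Finset.sum_congr rfl fun j _ => ?_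
    have : (symmDiff (cdiag s m α) (cdiag s m β)).filter (fun x => x.2 = j.val)
        = (Finset.Ico (min (tailSum α (j.val + 1)) (tailSum β (j.val + 1)))
            (max (tailSum α (j.val + 1)) (tailSum β (j.val + 1)))) ×ˢ {j.val} := by
      ext ⟨a, b⟩
      simp only [Finset.mem_filter, Finset.mem_symmDiff, cdiag, Finset.mem_product,
        Finset.mem_range, Finset.mem_Ico, Finset.mem_singleton]
      have := hle α ha (j.val + 1)
      have := hle β hb (j.val + 1)
      have := j.isLt
      constructor
      · rintro ⟨h, rfl⟩
        omega
      · rintro ⟨h, rfl⟩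
        omega
    rw [this, Finset.card_product, Nat.card_Ico, Finset.card_singleton]
    simp only [Fin.val_castSucc]
    omega
  · intro x
    simp only [Finset.coe_range, Set.mem_Iio, Finset.mem_coe, Finset.mem_symmDiff, cdiag,
      Finset.mem_filter, Finset.mem_product, Finset.mem_range]
    tauto

theorem diag_mem (s m : ℕ) (α : Fin (m + 1) → ℕ) : cdiag s m α ∈ Par s m := by
  classical
  unfold Par
  rw [Finset.mem_filter, Finset.mem_powerset]
  refine ⟨Finset.filter_subset _ _, ?_⟩
  rintro ⟨a, b⟩ ⟨c, d⟩ hle h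
  obtain ⟨h1, h2⟩ := Prod.mk_le_mk.1 hle
  simp only [Finset.mem_coe, cdiag, Finset.mem_filter, Finset.mem_product, Finset.mem_range] at h ⊢
  have := tailSum_anti α (Nat.add_le_add_right h2 1)
  omega

theorem diag_inj {s m : ℕ} (α β : Fin (m + 1) → ℕ) (ha : ∑ i, α i = s) (hb : ∑ i, β i = s)
    (h : cdiag s m α = cdiag s m β) : α = β := by
  have h0 : EMD α β = 0 := by
    rw [card_diag α β ha hb, h]
    simp
  unfold EMD at h0
  rw [Finset.sum_eq_zero_iff] at h0
  have h1 : ∀ k, k ≤ m + 1 → tailSum α k = tailSum β k := by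
    intro k hk
    rcases k with _ | k
    · rw [tailSum_zero, tailSum_zero, ha, hb]
    · have := h0 ⟨k, hk⟩ (Finset.mem_univ _)
      rw [prefix_eq α β (ha.trans hb.symm)] at this
      simp only at this
      omega
  funext i
  have e1 := tailSum_succ α i
  have e2 := tailSum_succ β i
  have e3 := h1 i.val (by omega)
  have e4 := h1 (i.val + 1) (by omega)
  omega

theorem diag_surj {s m : ℕ} (S : Finset (ℕ × ℕ)) (hS : S ∈ Par s m) :
    ∃ α : Fin (m + 1) → ℕ, ∑ i, α i = s ∧ cdiag s m α = S := by
  classical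
  unfold Par at hS
  rw [Finset.mem_filter, Finset.mem_powerset] at hS
  obtain ⟨hsub, hlow⟩ := hS
  let Y : YoungDiagram := ⟨S, hlow⟩
  have hY : ∀ i j, (i, j) ∈ S ↔ i < Y.colLen j := fun i j => by
    rw [← YoungDiagram.mem_iff_lt_colLen]
    rfl
  have hb : ∀ i j, i < Y.colLen j → i < s ∧ j < m := by
    intro i j h
    have := hsub ((hY i j).2 h)
    simpa using this
  have hs : ∀ j, Y.colLen j ≤ s := by
    intro j
    by_contra hc
    have := hb s j (by omega)
    omega
  have hm : ∀ j, m ≤ j → Y.colLen j = 0 := by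
    intro j hj
    by_contra hc
    have := hb 0 j (by omega)
    omega
  let e : ℕ → ℕ := fun k => if k = 0 then s else if k = m + 1 then 0 else Y.colLen (k - 1)
  have he0 : e 0 = s := by simp [e]
  have heS : ∀ k, e (k + 1) = Y.colLen k := by
    intro k
    by_cases hk : k = m
    · simp [e, hk, hm m le_rfl]
    · simp [e, hk]
  have hanti : Antitone e := by
    apply antitone_nat_of_succ_le
    intro k
    rcases k with _ | k
    · rw [he0, heS]
      exact hs 0
    · rw [heS, heS]
      exact Y.colLen_anti _ _ (Nat.le_succ k)
  have hend : e (m + 1) = 0 := by rw [heS, hm m le_rfl]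
  have ht := tailSum_tele (n := m + 1) e hanti hend
  refine ⟨fun i => e i.val - e (i.val + 1), ?_, ?_⟩
  · rw [← tailSum_zero, ht 0 (Nat.zero_le _), he0]
  · ext ⟨a, b⟩
    simp only [cdiag, Finset.mem_filter, Finset.mem_product, Finset.mem_range]
    rw [hY]
    constructor
    · rintro ⟨⟨h1, h2⟩, h3⟩
      rwa [ht _ (by omega), heS] at h3
    · intro h
      have := hb a b h
      refine ⟨this, ?_⟩
      rwa [ht _ (by omega), heS]

/-- Equation (4.4): the sum of `EMD(α,β)` over all ordered pairs of weak compositions of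
`s` into `n` parts equals `S⊖(s, n-1 | s, n-1)`. -/
theorem sum_EMD_eq_sdiff (s n : ℕ) (hn : 1 ≤ n) :
    ∑ p ∈ Finset.Nat.antidiagonalTuple n s ×ˢ Finset.Nat.antidiagonalTuple n s,
        EMD p.1 p.2
      = Sdiff s (n - 1) s (n - 1) := by
  obtain ⟨m, rfl⟩ : ∃ m, n = m + 1 := ⟨n - 1, by omega⟩
  rw [Nat.add_sub_cancel]
  have key : ∀ f : Finset (ℕ × ℕ) → ℕ,
      ∑ α ∈ Finset.Nat.antidiagonalTuple (m + 1) s, f (cdiag s m α) = ∑ l ∈ Par s m, f l := by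
    intro f
    refine Finset.sum_bij (fun α _ => cdiag s m α) (fun α _ => diag_mem s m α) ?_ ?_
      (fun _ _ => rfl)
    · intro α ha β hb h
      exact diag_inj α β (Finset.Nat.mem_antidiagonalTuple.1 ha)
        (Finset.Nat.mem_antidiagonalTuple.1 hb) h
    · intro S hS
      obtain ⟨α, h1, h2⟩ := diag_surj S hS
      exact ⟨α, Finset.Nat.mem_antidiagonalTuple.2 h1, h2⟩
  unfold Sdiff
  rw [Finset.sum_product, ← key]
  refine Finset.sum_congr rfl fun α ha => ?_
  rw [← key]
  refine Finset.sum_congr rfl fun β hb => ?_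
  exact card_diag α β (Finset.Nat.mem_antidiagonalTuple.1 ha)
    (Finset.Nat.mem_antidiagonalTuple.1 hb)
end

section
/- Let s be a nonnegative integer and n a positive integer, and let (α, β) be chosen uniformly at random from C(s,n) × C(s,n). Then the expected value of EMD(α, β) equals (s(n−1)/(4s+4n−2)) · C(2s+2n, 2s+1) / C(s+n−1, s)²; equivalently, (4s+4n−2) · Σ_{(α,β) ∈ C(s,n)×C(s,n)} EMD(α, β) = s(n−1) · C(2s+2n, 2s+1). (Theorem 4.3, closed form for the expected EMD.) -/
open Finset

section PS
open PowerSeries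

abbrev BB := PowerSeries (PowerSeries ℤ)

noncomputable def YY : BB := PowerSeries.C (PowerSeries.X : PowerSeries ℤ)

lemma coeff_YY_mul (f : BB) (a : ℕ) :
    coeff a (YY * f) = (PowerSeries.X : PowerSeries ℤ) * coeff a f := by
  simp [YY, coeff_C_mul]

/-- generating function of pairs at distance d -/
noncomputable def GG (d : ℕ) : BB :=
  PowerSeries.mk fun a => PowerSeries.mk fun i => (((a + i).choose i * (a + d + i).choose i : ℕ) : ℤ)

lemma GG_coeff (d a i : ℕ) : coeff i (coeff a (GG d)) =
    (((a + i).choose i * (a + d + i).choose i : ℕ) : ℤ) := by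
  simp [GG]

lemma ps_ext {f g : BB} (h : ∀ a i, coeff i (coeff a f) = coeff i (coeff a g)) : f = g := by
  ext a i; exact h a i

lemma pas (b i : ℕ) : (b + 1 + (i + 1)).choose (i + 1) =
    (b + 1 + i).choose i + (b + (i + 1)).choose (i + 1) := by
  rw [show b + 1 + (i + 1) = (b + 1 + i) + 1 by ring, Nat.choose_succ_succ,
    show b + (i + 1) = b + 1 + i by ring]

lemma GG_rec (d : ℕ) : (1 + X - YY) * GG (d + 1) = X * GG (d + 2) + GG d := by
  have : GG (d+1) + X * GG (d+1) = YY * GG (d+1) + X * GG (d + 2) + GG d := by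
    apply ps_ext
    intro a i
    rcases a with _ | a <;> rcases i with _ | i <;>
      simp only [map_add, coeff_succ_X_mul, coeff_zero_X_mul, coeff_YY_mul, GG_coeff]
    · simp
    · have := pas d i
      simp at this ⊢
      exact_mod_cast this
    · simp
    · have h1 := pas a i
      have h2 := pas (a + d + 1) i
      have e1 : a + 1 + (d + 1) + (i + 1) = a + d + 1 + 1 + (i + 1) := by ring
      have e2 : a + (d + 1) + (i + 1) = a + d + 1 + (i + 1) := by ring
      have e3 : a + 1 + (d + 1) + i = a + d + 1 + 1 + i := by ring
      have e4 : a + (d + 2) + (i + 1) = a + d + 1 + 1 + (i + 1) := by ring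
      have e5 : a + 1 + d + (i + 1) = a + d + 1 + (i + 1) := by ring
      rw [e1, e2, e3, e4, e5]
      rw [h1, h2]
      push_cast
      ring
  linear_combination this

lemma GG_rec0 : (1 + X - YY) * GG 0 = 1 + 2 * X * GG 1 := by
  have : GG 0 + X * GG 0 = YY * GG 0 + X * GG 1 + X * GG 1 + 1 := by
    apply ps_ext
    intro a i
    rcases a with _ | a <;> rcases i with _ | i <;>
      simp only [map_add, coeff_succ_X_mul, coeff_zero_X_mul, coeff_YY_mul, GG_coeff]
    · simp
    · simp [coeff_one]
    · simp [coeff_one]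
    · have h1 := pas a i
      simp only [add_zero]
      rw [h1]
      simp [coeff_one]
      ring
  linear_combination this

lemma GG_I_step (d : ℕ) : GG (d + 2) * GG d - GG (d + 1) ^ 2 =
    X * (GG (d + 3) * GG (d + 1) - GG (d + 2) ^ 2) := by
  have h1 := GG_rec d
  have h2 := GG_rec (d + 1)
  linear_combination (-GG (d+2)) * h1 + GG (d+1) * h2

lemma GG_I (d : ℕ) : GG (d + 2) * GG d = GG (d + 1) ^ 2 := by
  have key : ∀ k, ∀ d, (X : BB) ^ k ∣ GG (d + 2) * GG d - GG (d + 1) ^ 2 := by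
    intro k
    induction k with
    | zero => intro d; simp
    | succ k ih =>
      intro d
      rw [GG_I_step, pow_succ']
      exact mul_dvd_mul_left _ (ih (d + 1))
  rw [← sub_eq_zero]
  ext1 n
  simpa using (X_pow_dvd_iff.1 (key (n + 1) d)) n (Nat.lt_succ_self n)

noncomputable def Del : BB := (1 + X - YY) ^ 2 - 4 * X

lemma Del_G0 : Del * GG 0 ^ 2 = 1 := by
  have h0 := GG_rec0
  have h1 := GG_rec 0
  have h2 := GG_I 0
  simp only [zero_add] at h1 h2
  unfold Del
  linear_combination ((1 + X - YY) * GG 0 - 2 * X * GG 1 + 1) * h0 + 4 * X * GG 0 * h1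
    + 4 * X ^ 2 * h2

noncomputable def HH (d : ℕ) : BB := X ^ d * GG d ^ 2

lemma Del_H (d : ℕ) : Del * HH (d + 1) = X * (HH (d + 2) - 2 * HH (d + 1) + HH d) := by
  have h1 := GG_rec d
  have h2 := GG_I d
  unfold HH Del
  linear_combination X ^ (d + 1) * ((1 + X - YY) * GG (d + 1) + X * GG (d + 2) + GG d) * h1
    + 2 * X ^ (d + 2) * h2

lemma Del_T (D : ℕ) : Del * (∑ d ∈ range (D + 1), (d : BB) * HH d) =
    X * HH 0 + X * ((D : BB) * HH (D + 1) - ((D : BB) + 1) * HH D) := by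
  induction D with
  | zero => simp
  | succ D ih =>
    rw [Finset.sum_range_succ, mul_add, ih]
    push_cast
    linear_combination ((D : BB) + 1) * Del_H D

noncomputable def RR : BB :=
  PowerSeries.mk fun s => PowerSeries.mk fun m =>
    (((2 * s + 2 * m + 2).choose (2 * s + 1) : ℕ) : ℤ)

lemma RR_coeff (s m : ℕ) : coeff m (coeff s RR) =
    (((2 * s + 2 * m + 2).choose (2 * s + 1) : ℕ) : ℤ) := by
  simp [RR]

lemma four_pas (n k : ℕ) : (n + 4).choose (k + 4) + n.choose k + n.choose (k + 4) =
    2 * (n + 2).choose (k + 2) + 2 * (n + 2).choose (k + 4) + 2 * n.choose (k + 2) := by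
  simp only [Nat.choose_succ_succ' , show n + 4 = n + 1 + 1 + 1 + 1 by rfl,
    show n + 2 = n + 1 + 1 by rfl, show k + 4 = k + 1 + 1 + 1 + 1 by rfl,
    show k + 2 = k + 1 + 1 by rfl]
  ring

lemma Del_R : Del * RR = 2 := by
  have : RR + X * (X * RR) + YY * (YY * RR) = X * RR + X * RR + YY * RR + YY * RR
      + YY * (X * RR) + YY * (X * RR) + 1 + 1 := by
    apply ps_ext
    intro s m
    rcases s with _ | _ | s <;> rcases m with _ | _ | m <;>
      simp only [map_add, coeff_succ_X_mul, coeff_zero_X_mul, coeff_YY_mul, RR_coeff, mul_zero,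
        map_zero, coeff_one]
    · simp
    · simp [coeff_one]
    · simp [coeff_one]; ring
    · simp
    · simp [coeff_one]; decide
    · simp [coeff_one]
      simp only [show 2 * (m + 1 + 1) = 2 * m + 4 by ring, show 2 * (m + 1) = 2 * m + 2 by ring]
      simp only [show 2 + (2 * m + 4) + 2 = 2 * m + 4 + 1 + 1 + 1 + 1 by ring,
        show 2 + (2 * m + 2) + 2 = 2 * m + 4 + 1 + 1 by ring,
        show 2 + 2 * m + 2 = 2 * m + 4 by ring,
        Nat.choose_succ_succ' _ 2, Nat.choose_succ_succ' _ 1, Nat.choose_one_right]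
      push_cast
      ring
    · have h := four_pas (2 * s + 2) (2 * s + 1)
      simp [coeff_one]
      rw [Nat.choose_eq_zero_of_lt (show 2 * s + 2 < 2 * s + 1 + 4 by lia),
        Nat.choose_eq_zero_of_lt (show 2 * s + 2 + 2 < 2 * s + 1 + 4 by lia),
        Nat.choose_eq_zero_of_lt (show 2 * s + 2 < 2 * s + 1 + 2 by lia)] at h
      rw [Nat.choose_succ_self_right (2 * s + 1)] at h
      have h5 : (2 * s + 2 + 4).choose (2 * s + 1 + 4) = 2 * s + 6 :=
        Nat.choose_succ_self_right (2 * s + 5)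
      have h6 : (2 * s + 2 + 2).choose (2 * s + 1 + 2) = 2 * s + 4 :=
        Nat.choose_succ_self_right (2 * s + 3)
      rw [h5, h6] at h
      lia
    · have h := four_pas (2 * s + 4) (2 * s + 1)
      simp [coeff_one, -Nat.choose_succ_self_right]
      rw [Nat.choose_eq_zero_of_lt (show 2 * s + 4 < 2 * s + 1 + 4 by lia)] at h
      simp only [show 2 * (s + 1 + 1) + 2 + 2 = 2 * s + 4 + 4 by ring,
        show 2 * (s + 1) + 2 + 2 = 2 * s + 4 + 2 by ring,
        show 2 * s + 2 + 2 = 2 * s + 4 by ring,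
        show 2 * (s + 1 + 1) + 2 = 2 * s + 4 + 2 by ring,
        show 2 * (s + 1) + 2 = 2 * s + 4 by ring,
        show 2 * (s + 1 + 1) + 1 = 2 * s + 1 + 4 by ring,
        show 2 * (s + 1) + 1 = 2 * s + 1 + 2 by ring]
      lia
    · have h := four_pas (2 * s + 2 * m + 6) (2 * s + 1)
      simp [coeff_one]
      simp only [show 2 * (s + 1 + 1) + 2 * (m + 1 + 1) + 2 = 2 * s + 2 * m + 6 + 4 by ring,
        show 2 * (s + 1) + 2 * (m + 1 + 1) + 2 = 2 * s + 2 * m + 6 + 2 by ring,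
        show 2 * s + 2 * (m + 1 + 1) + 2 = 2 * s + 2 * m + 6 by ring,
        show 2 * (s + 1 + 1) + 2 * (m + 1) + 2 = 2 * s + 2 * m + 6 + 2 by ring,
        show 2 * (s + 1 + 1) + 2 * m + 2 = 2 * s + 2 * m + 6 by ring,
        show 2 * (s + 1) + 2 * (m + 1) + 2 = 2 * s + 2 * m + 6 by ring,
        show 2 * (s + 1 + 1) + 1 = 2 * s + 1 + 4 by ring,
        show 2 * (s + 1) + 1 = 2 * s + 1 + 2 by ring]
      lia
  unfold Del
  linear_combination this

/-- coefficientwise derivative in Y -/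
noncomputable def dY (f : BB) : BB := PowerSeries.mk fun a => derivative ℤ (coeff a f)

lemma dY_add (f g : BB) : dY (f + g) = dY f + dY g := by
  ext1 a; simp [dY]

lemma dY_mul (f g : BB) : dY (f * g) = dY f * g + f * dY g := by
  ext1 a
  simp only [dY, coeff_mk, coeff_mul, map_add, map_sum, Derivation.leibniz, smul_eq_mul]
  rw [← Finset.sum_add_distrib]
  apply Finset.sum_congr rfl
  intros
  ring

lemma dY_sub (f g : BB) : dY (f - g) = dY f - dY g := by
  ext1 a; simp [dY]

lemma dY_X : dY X = 0 := by
  ext1 a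
  simp only [dY, coeff_mk, coeff_X]
  split_ifs <;> simp

lemma dY_one : dY 1 = 0 := by
  ext1 a
  simp only [dY, coeff_mk, coeff_one]
  split_ifs <;> simp

lemma dY_YY : dY YY = 1 := by
  ext1 a
  simp only [dY, coeff_mk, YY, coeff_C, coeff_one]
  split_ifs <;> simp

noncomputable def DD (f : BB) : BB := derivative _ f + dY f

lemma DD_mul (f g : BB) : DD (f * g) = DD f * g + f * DD g := by
  simp only [DD, Derivation.leibniz, dY_mul, smul_eq_mul]; ring

lemma DD_add (f g : BB) : DD (f + g) = DD f + DD g := by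
  simp only [DD, map_add, dY_add]; ring

lemma DD_sub (f g : BB) : DD (f - g) = DD f - DD g := by
  simp only [DD, map_sub, dY_sub]; ring

lemma DD_X : DD X = 1 := by simp [DD, dY_X]

lemma DD_one : DD 1 = 0 := by simp [DD, dY_one]

lemma DD_YY : DD YY = 1 := by simp [DD, dY_YY]; simp [YY]

lemma DD_Del : DD Del = -4 := by
  have : Del = (1 + X - YY) * (1 + X - YY) - (X + X + X + X) := by unfold Del; ring
  rw [this]
  simp only [DD_mul, DD_sub, DD_add, DD_X, DD_YY, DD_one]
  ring

lemma Del_DR : Del ^ 2 * DD RR = 8 := by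
  have h := congrArg DD Del_R
  rw [DD_mul, DD_Del, show (2 : BB) = 1 + 1 by norm_num, DD_add, DD_one] at h
  linear_combination Del * h + 4 * Del_R

lemma T_dvd (D : ℕ) : (X : BB) ^ (D + 1) ∣
    4 * (8 * (∑ d ∈ range (D + 1), (d : BB) * HH d) - X * DD RR) := by
  refine ⟨RR ^ 2 * Del * 8 * ((D : BB) * X * GG (D + 1) ^ 2 - ((D : BB) + 1) * GG D ^ 2), ?_⟩
  have h1 := Del_T D
  have h0 := Del_G0
  have h2 := Del_R
  have h3 := Del_DR
  generalize (∑ d ∈ range (D + 1), (d : BB) * HH d) = T at *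
  simp only [HH, pow_zero, one_mul] at h1
  have e4 : Del ^ 2 * RR ^ 2 = 4 := by linear_combination (Del * RR + 2) * h2
  linear_combination (-(8 * T - X * DD RR)) * e4 + 8 * RR ^ 2 * Del * h1 + 8 * RR ^ 2 * X * h0
    - RR ^ 2 * X * h3

lemma T_coeff (s m : ℕ) :
    8 * coeff m (coeff (s + 1) (∑ d ∈ range (s + 2), (d : BB) * HH d)) =
      (s + 1) * (((2 * (s + 1) + 2 * m + 2).choose (2 * (s + 1) + 1) : ℕ) : ℤ)
       + (m + 1) * (((2 * s + 2 * (m + 1) + 2).choose (2 * s + 1) : ℕ) : ℤ) := by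
  have h := congrArg (coeff m) (X_pow_dvd_iff.1 (T_dvd (s + 1)) (s + 1) (by lia))
  generalize (∑ d ∈ range (s + 2), (d : BB) * HH d) = T at *
  have e : ∀ f : BB, 4 * f = f + f + f + f := by intro f; ring
  have e' : ∀ f : BB, 8 * f = f + f + f + f + f + f + f + f := by intro f; ring
  rw [e, e'] at h
  simp only [map_add, map_sub, coeff_succ_X_mul, DD, dY, coeff_mk, coeff_derivative, RR_coeff,
    map_zero] at h
  have e3 : coeff m (coeff (s + 1) RR * ((s : PowerSeries ℤ) + 1)) =
    (s + 1) * (((2 * (s + 1) + 2 * m + 2).choose (2 * (s + 1) + 1) : ℕ) : ℤ) := by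
    rw [show ((s : PowerSeries ℤ) + 1) = C ((s : ℤ) + 1) by simp, coeff_mul_C, RR_coeff]
    ring
  rw [e3] at h
  linarith

end PS

section Comb

/-- number of compositions -/
def KK (n s : ℕ) : ℕ := (Finset.Nat.antidiagonalTuple n s).card

lemma sum_tuple_succ {M : Type*} [AddCommMonoid M] (n s : ℕ) (f : (Fin (n + 1) → ℕ) → M) :
    ∑ α ∈ Finset.Nat.antidiagonalTuple (n + 1) s, f α =
      ∑ p ∈ antidiagonal s, ∑ α ∈ Finset.Nat.antidiagonalTuple n p.2, f (Fin.cons p.1 α) := by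
  rw [Finset.sum_sigma']
  symm
  refine Finset.sum_bij' (fun x _ => Fin.cons x.1.1 x.2)
    (fun α _ => ⟨(α 0, ∑ i, Fin.tail α i), Fin.tail α⟩) ?_ ?_ ?_ ?_ ?_
  · rintro ⟨⟨a, b⟩, α⟩ h
    simp only [mem_sigma, HasAntidiagonal.mem_antidiagonal, Finset.Nat.mem_antidiagonalTuple] at h ⊢
    rw [Fin.sum_univ_succ]
    simp [h.1, h.2]
  · intro α h
    simp only [mem_sigma, HasAntidiagonal.mem_antidiagonal, Finset.Nat.mem_antidiagonalTuple] at h ⊢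
    rw [Fin.sum_univ_succ] at h
    exact ⟨h, trivial⟩
  · rintro ⟨⟨a, b⟩, α⟩ h
    simp only [mem_sigma, HasAntidiagonal.mem_antidiagonal, Finset.Nat.mem_antidiagonalTuple] at h
    obtain ⟨h1, rfl⟩ := h
    simp
  · intro α h
    simp
  · intro x h
    rfl

lemma KK_succ (n s : ℕ) : KK (n + 1) s = ∑ p ∈ antidiagonal s, KK n p.2 := by
  unfold KK
  simp only [Finset.card_eq_sum_ones]
  rw [sum_tuple_succ]

lemma KK_succ' (n s : ℕ) : KK (n + 1) s = ∑ p ∈ antidiagonal s, KK n p.1 := by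
  rw [KK_succ, ← Finset.Nat.sum_antidiagonal_swap]
  rfl

lemma KK_zero (s : ℕ) : KK 0 s = if s = 0 then 1 else 0 := by
  rcases s with _ | s <;> simp [KK]

lemma KK_eq (n s : ℕ) : KK (n + 1) s = (s + n).choose n := by
  induction n generalizing s with
  | zero => 
    simp [KK]
  | succ n ih =>
    rw [KK_succ']
    simp only [ih]
    rw [Finset.Nat.sum_antidiagonal_eq_sum_range_succ_mk]
    simp only
    rw [Nat.sum_range_add_choose, add_assoc]

def PP {n : ℕ} (α : Fin n → ℕ) (t : ℕ) : ℕ := ∑ i ∈ univ.filter (fun i : Fin n => i.val < t), α i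

lemma PP_zero {n : ℕ} (α : Fin n → ℕ) : PP α 0 = 0 := by simp [PP]

lemma PP_cons {n : ℕ} (x : ℕ) (α : Fin n → ℕ) (t : ℕ) :
    PP (Fin.cons x α : Fin (n + 1) → ℕ) (t + 1) = x + PP α t := by
  simp [PP, Finset.sum_filter, Fin.sum_univ_succ]

lemma sum_PP (t k s : ℕ) : ∀ n, n = k + t → ∀ φ : ℕ → ℤ, 
    ∑ α ∈ Finset.Nat.antidiagonalTuple n s, φ (PP α t) =
      ∑ p ∈ antidiagonal s, (KK t p.1 : ℤ) * KK k p.2 * φ p.1 := by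
  induction t generalizing s with
  | zero =>
    rintro n rfl φ
    simp only [PP_zero, KK_zero]
    rw [Finset.Nat.sum_antidiagonal_eq_sum_range_succ_mk, Finset.sum_range_succ']
    simp [KK]
  | succ t ih =>
    rintro n rfl φ
    rw [← add_assoc, sum_tuple_succ]
    simp only [PP_cons]
    have : ∀ p ∈ antidiagonal s, ∑ α ∈ Finset.Nat.antidiagonalTuple (k + t) p.2, φ (p.1 + PP α t)
      = ∑ q ∈ antidiagonal p.2, (KK t q.1 : ℤ) * KK k q.2 * φ (p.1 + q.1) := by
      intro p _
      exact ih p.2 _ rfl (fun a => φ (p.1 + a))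
    rw [Finset.sum_congr rfl this]
    simp only [KK_succ' t]
    push_cast
    simp only [Finset.sum_mul]
    rw [Finset.sum_sigma', Finset.sum_sigma']
    refine Finset.sum_bij' (fun x _ => ⟨(x.1.1 + x.2.1, x.2.2), (x.2.1, x.1.1)⟩)
      (fun x _ => ⟨(x.2.2, x.2.1 + x.1.2), (x.2.1, x.1.2)⟩) ?_ ?_ ?_ ?_ ?_
    all_goals
      rintro ⟨⟨a, b⟩, ⟨c, d⟩⟩ h
      simp only [mem_sigma, HasAntidiagonal.mem_antidiagonal] at h
      obtain ⟨h1, h2⟩ := h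
      subst h2
      try simp only [mem_sigma, HasAntidiagonal.mem_antidiagonal]
    · lia
    · lia
    · simp [add_comm]

lemma sum_pairs (t k s n : ℕ) (h : n = k + t) :
    ∑ p ∈ Finset.Nat.antidiagonalTuple n s ×ˢ Finset.Nat.antidiagonalTuple n s,
      |(PP p.1 t : ℤ) - PP p.2 t| =
    ∑ p ∈ antidiagonal s, ∑ q ∈ antidiagonal s,
      (KK t p.1 : ℤ) * KK k p.2 * ((KK t q.1 : ℤ) * KK k q.2 * |(p.1 : ℤ) - q.1|) := by
  rw [Finset.sum_product]
  rw [sum_PP t k s n h (fun a => ∑ β ∈ Finset.Nat.antidiagonalTuple n s, |(a : ℤ) - PP β t|)]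
  apply Finset.sum_congr rfl
  intro p _
  rw [sum_PP t k s n h (fun b => |(p.1 : ℤ) - b|), Finset.mul_sum]

lemma EMD_eq {n : ℕ} (α β : Fin n → ℕ) :
    (EMD α β : ℤ) = ∑ t ∈ range n, |(PP α (t + 1) : ℤ) - PP β (t + 1)| := by
  rw [EMD, Finset.sum_range]
  push_cast
  apply Finset.sum_congr rfl
  intro j _
  simp only [PP, Order.lt_add_one_iff, Fin.val_fin_le]
  push_cast
  rw [Finset.sum_sub_distrib]

lemma sym_sum (f : ℕ → ℕ → ℤ) (hf : ∀ a b, f a b = f b a) (s : ℕ) :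
    ∑ a ∈ range (s + 1), ∑ b ∈ range (s + 1), f a b * |(a : ℤ) - b| =
      2 * ∑ d ∈ range (s + 1), ∑ a ∈ range (s - d + 1), d * f a (a + d) := by
  induction s with
  | zero => simp
  | succ s ih =>
    have h1 : ∑ a ∈ range (s + 2), ∑ b ∈ range (s + 2), f a b * |(a : ℤ) - b| =
      ∑ a ∈ range (s + 1), ∑ b ∈ range (s + 1), f a b * |(a : ℤ) - b|
       + 2 * ∑ a ∈ range (s + 1), f a (s + 1) * ((s : ℤ) + 1 - a) := by
      rw [Finset.sum_range_succ]
      simp only [Finset.sum_range_succ _ (s + 1)]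
      rw [Finset.sum_add_distrib, two_mul, add_assoc]
      congr 2
      · apply Finset.sum_congr rfl
        intro a ha
        rw [abs_of_nonpos]
        · push_cast; ring
        · have := Finset.mem_range.1 ha
          push_cast; lia
      · simp only [sub_self, abs_zero, mul_zero, add_zero]
        apply Finset.sum_congr rfl
        intro a ha
        rw [abs_of_nonneg, hf]
        · push_cast; ring
        · have := Finset.mem_range.1 ha
          push_cast; lia
    have h2 : ∑ d ∈ range (s + 2), ∑ a ∈ range (s + 1 - d + 1), (d : ℤ) * f a (a + d) =
      ∑ d ∈ range (s + 1), ∑ a ∈ range (s - d + 1), (d : ℤ) * f a (a + d)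
       + ∑ a ∈ range (s + 1), f a (s + 1) * ((s : ℤ) + 1 - a) := by
      rw [Finset.sum_range_succ]
      have : ∀ d ∈ range (s + 1), ∑ a ∈ range (s + 1 - d + 1), (d : ℤ) * f a (a + d) =
        ∑ a ∈ range (s - d + 1), (d : ℤ) * f a (a + d) + d * f (s + 1 - d) (s + 1) := by
        intro d hd
        have := Finset.mem_range.1 hd
        rw [Finset.sum_range_succ, show s + 1 - d + d = s + 1 by lia,
          show s + 1 - d = s - d + 1 by lia]
      rw [Finset.sum_congr rfl this, Finset.sum_add_distrib, add_assoc]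
      congr 1
      have e := Finset.sum_range_reflect (fun a => f a (s + 1) * ((s : ℤ) + 1 - a)) (s + 2)
      rw [Finset.sum_range_succ (fun a => f a (s + 1) * ((s : ℤ) + 1 - a)) (s + 1)] at e
      push_cast at e
      rw [sub_self, mul_zero, add_zero] at e
      rw [← e, Finset.sum_range_succ _ (s + 1)]
      congr 1
      · apply Finset.sum_congr rfl
        intro d hd
        have := Finset.mem_range.1 hd
        rw [Nat.cast_sub (by lia)]
        push_cast; ring
      · simp [mul_comm]
    rw [h1, h2, ih]
    ring

end Comb

section Final
open PowerSeries

lemma coeff_T (s m : ℕ) :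
    coeff m (coeff s (∑ d ∈ range (s + 1), (d : BB) * HH d)) =
      ∑ d ∈ range (s + 1), ∑ q ∈ antidiagonal m, ∑ p ∈ antidiagonal (s - d),
        (d : ℤ) * (((p.1 + q.1).choose q.1 : ℤ) * (p.1 + d + q.1).choose q.1 *
          ((p.2 + q.2).choose q.2 * (p.2 + d + q.2).choose q.2)) := by
  rw [map_sum, map_sum]
  apply Finset.sum_congr rfl
  intro d hd
  have hd' := Finset.mem_range.1 hd
  rw [show (d : BB) = C (C (d : ℤ)) by simp, coeff_C_mul, coeff_C_mul, HH, coeff_X_pow_mul',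
    if_pos (by lia), pow_two, coeff_mul, map_sum]
  simp only [coeff_mul, GG_coeff]
  rw [Finset.sum_comm, Finset.mul_sum]
  simp only [Finset.mul_sum]
  push_cast
  rfl

lemma inner_eq (s : ℕ) (u v : ℕ → ℤ) :
    ∑ p ∈ antidiagonal s, ∑ q ∈ antidiagonal s,
      u p.1 * v p.2 * (u q.1 * v q.2 * |(p.1 : ℤ) - q.1|) =
    2 * ∑ d ∈ range (s + 1), ∑ p ∈ antidiagonal (s - d),
      (d : ℤ) * (u p.1 * u (p.1 + d) * (v p.2 * v (p.2 + d))) := by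
  have h := sym_sum (fun a b => u a * v (s - a) * (u b * v (s - b))) (by intros; ring) s
  simp only [Finset.Nat.sum_antidiagonal_eq_sum_range_succ_mk]
  simp only [← mul_assoc] at h ⊢
  refine h.trans ?_
  congr 1
  apply Finset.sum_congr rfl
  intro d hd
  apply Finset.sum_congr rfl
  intro a ha
  have hd' := Finset.mem_range.1 hd
  have ha' := Finset.mem_range.1 ha
  rw [show s - d - a + d = s - a by lia, show s - (a + d) = s - d - a by lia]
  ring

lemma total_eq (s m : ℕ) :
    ((∑ p ∈ Finset.Nat.antidiagonalTuple (m + 2) s ×ˢ Finset.Nat.antidiagonalTuple (m + 2) s,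
          EMD p.1 p.2 : ℕ) : ℤ) =
      2 * coeff m (coeff s (∑ d ∈ range (s + 1), (d : BB) * HH d)) := by
  push_cast
  simp only [EMD_eq]
  rw [Finset.sum_comm, Finset.sum_range_succ]
  have hlast : ∑ p ∈ Finset.Nat.antidiagonalTuple (m + 2) s ×ˢ
      Finset.Nat.antidiagonalTuple (m + 2) s,
      |(PP p.1 (m + 1 + 1) : ℤ) - PP p.2 (m + 1 + 1)| = 0 := by
    apply Finset.sum_eq_zero
    intro p hp
    simp only [Finset.mem_product, Finset.Nat.mem_antidiagonalTuple] at hp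
    have e : ∀ α : Fin (m + 2) → ℕ, PP α (m + 1 + 1) = ∑ i, α i := by
      intro α
      unfold PP
      rw [Finset.filter_true_of_mem]
      intro i _
      exact i.2
    rw [e, e, hp.1, hp.2]
    simp
  rw [hlast, add_zero, coeff_T, Finset.sum_comm (s := range (s + 1)), Finset.mul_sum,
    Finset.Nat.sum_antidiagonal_eq_sum_range_succ_mk]
  apply Finset.sum_congr rfl
  intro t ht
  have ht' := Finset.mem_range.1 ht
  rw [sum_pairs (t + 1) (m - t + 1) s (m + 2) (by lia)]
  simp only [KK_eq]
  exact inner_eq s (fun a => ((a + t).choose t : ℤ)) (fun b => ((b + (m - t)).choose (m - t) : ℤ))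

lemma one_eq (s : ℕ) :
    (∑ p ∈ Finset.Nat.antidiagonalTuple 1 s ×ˢ Finset.Nat.antidiagonalTuple 1 s,
          EMD p.1 p.2) = 0 := by
  simp [EMD]

lemma choose_fin (s m : ℕ) :
    (2 * (s + 1 + (m + 2)) - 1) * ((s + 1) * (((2 * (s + 1) + 2 * m + 2).choose (2 * (s + 1) + 1) : ℕ) : ℤ)
       + (m + 1) * (((2 * s + 2 * (m + 1) + 2).choose (2 * s + 1) : ℕ) : ℤ)) =
    2 * ((s + 1) * (m + 1) * (((2 * (s + 1) + 2 * (m + 2)).choose (2 * (s + 1) + 1) : ℕ) : ℤ)) := by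
  have e1 : 2 * (s + 1) + 2 * m + 2 = 2 * s + 2 * m + 4 := by ring
  have e2 : 2 * s + 2 * (m + 1) + 2 = 2 * s + 2 * m + 4 := by ring
  have e3 : 2 * (s + 1) + 2 * (m + 2) = 2 * s + 2 * m + 4 + 1 + 1 := by ring
  have e4 : 2 * (s + 1) + 1 = 2 * s + 1 + 1 + 1 := by ring
  rw [e1, e2, e3, e4]
  have a1 := Nat.add_one_mul_choose_eq (2 * s + 2 * m + 4) (2 * s + 1)
  have a2 := Nat.add_one_mul_choose_eq (2 * s + 2 * m + 4 + 1) (2 * s + 1 + 1)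
  have b1 := Nat.choose_mul_succ_eq (2 * s + 2 * m + 4) (2 * s + 1 + 1 + 1)
  have b2 := Nat.choose_mul_succ_eq (2 * s + 2 * m + 4 + 1) (2 * s + 1 + 1 + 1)
  rw [show 2 * s + 2 * m + 4 + 1 - (2 * s + 1 + 1 + 1) = 2 * m + 2 by lia] at b1
  rw [show 2 * s + 2 * m + 4 + 1 + 1 - (2 * s + 1 + 1 + 1) = 2 * m + 3 by lia] at b2
  generalize (2 * s + 2 * m + 4).choose (2 * s + 1) = A at *
  generalize (2 * s + 2 * m + 4).choose (2 * s + 1 + 1 + 1) = B at *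
  generalize (2 * s + 2 * m + 4 + 1).choose (2 * s + 1 + 1) = E at *
  generalize (2 * s + 2 * m + 4 + 1).choose (2 * s + 1 + 1 + 1) = F at *
  generalize (2 * s + 2 * m + 4 + 1 + 1).choose (2 * s + 1 + 1 + 1) = G at *
  zify at a1 a2 b1 b2
  have hne : (2 * (s : ℤ) + 2 * m + 4 + 1 + 1) ≠ 0 := by positivity
  apply mul_left_cancel₀ hne
  linear_combination (2 * (s : ℤ) + 2 * m + 4 + 1 + 1) * (m + 1) * a1
    + (m + 1) * (2 * (s : ℤ) + 2) * a2
    + (2 * (s : ℤ) + 2 * m + 4 + 1 + 1) * (s + 1) * b1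
    + (s + 1) * (2 * (m : ℤ) + 2) * b2

end Final

theorem expected_EMD_closed_form (s n : ℕ) (hn : 1 ≤ n) :
    (4 * s + 4 * n - 2) *
        (∑ p ∈ Finset.Nat.antidiagonalTuple n s ×ˢ Finset.Nat.antidiagonalTuple n s,
          EMD p.1 p.2)
      = s * (n - 1) * (2 * s + 2 * n).choose (2 * s + 1) := by
  obtain ⟨n, rfl⟩ : ∃ k, n = k + 1 := ⟨n - 1, by lia⟩
  rcases n with _ | m
  · rw [show 0 + 1 = 1 by rfl, one_eq]
    simp
  · have h := total_eq s m
    rw [show m + 1 + 1 = m + 2 by rfl]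
    rcases s with _ | s
    · simp only [zero_add, Finset.sum_range_one, Nat.cast_zero, zero_mul, map_zero,
        mul_zero] at h
      have h0 := Int.natCast_eq_zero.1 h
      rw [h0]
      simp
    · have h2 := T_coeff s m
      have h3 := choose_fin s m
      rw [← h2] at h3
      rw [show s + 1 + 1 = s + 2 by rfl] at h
      generalize (∑ p ∈ Finset.Nat.antidiagonalTuple (m + 2) (s + 1) ×ˢ
        Finset.Nat.antidiagonalTuple (m + 2) (s + 1), EMD p.1 p.2) = S at *
      rw [show 4 * (s + 1) + 4 * (m + 2) - 2 = 4 * s + 4 * m + 10 by lia,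
        show m + 2 - 1 = m + 1 by lia]
      zify
      push_cast
      rw [h]
      linarith
end

section
/- Fix a positive integer n ≥ 2. Let E(s) := (Σ_{(α,β) ∈ C(s,n)×C(s,n)} EMD(α, β)) / C(s+n−1, s)² denote the expected EMD over uniformly random pairs from C(s,n) × C(s,n). Then lim_{s→∞} E(s)/s = √π · (n−1) · Γ(n) / (4 · Γ(n + 1/2)), where Γ denotes the real Gamma function. (Remark 4.4.) -/
open Finset

namespace EMDaux

/-- partial sum -/
def ps {n : ℕ} (j : ℕ) (α : Fin n → ℕ) : ℕ := ∑ i, if i.val < j then α i else 0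

lemma sum_tuple_succ {M : Type*} [AddCommMonoid M] (n s : ℕ) (f : (Fin (n+1) → ℕ) → M) :
    ∑ α ∈ Finset.Nat.antidiagonalTuple (n+1) s, f α =
      ∑ p ∈ antidiagonal s, ∑ α ∈ Finset.Nat.antidiagonalTuple n p.2, f (Fin.cons p.1 α) := by
  rw [Finset.sum_sigma']
  symm
  refine Finset.sum_bij' (fun x _ => (Fin.cons x.1.1 x.2 : Fin (n+1) → ℕ))
    (fun α _ => ⟨(α 0, ∑ i, Fin.tail α i), Fin.tail α⟩) ?_ ?_ ?_ ?_ ?_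
  · rintro ⟨⟨a, b⟩, α⟩ h
    simp [Finset.Nat.mem_antidiagonalTuple, Fin.sum_univ_succ] at h ⊢
    omega
  · intro α h
    simp [Finset.Nat.mem_antidiagonalTuple, Fin.sum_univ_succ, Fin.tail] at h ⊢
    omega
  · rintro ⟨⟨a, b⟩, α⟩ h
    simp [Finset.Nat.mem_antidiagonalTuple] at h ⊢
    exact h.2
  · intro α h
    simp
  · rintro ⟨⟨a, b⟩, α⟩ h
    rfl

lemma sum_triple {M : Type*} [AddCommMonoid M] (s : ℕ) (f : ℕ → ℕ → ℕ → M) :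
    ∑ p ∈ antidiagonal s, ∑ q ∈ antidiagonal p.2, f p.1 q.1 q.2 =
      ∑ p ∈ antidiagonal s, ∑ q ∈ antidiagonal p.1, f q.1 q.2 p.2 := by
  rw [Finset.sum_sigma', Finset.sum_sigma']
  refine Finset.sum_bij' (fun x _ => ⟨(x.1.1 + x.2.1, x.2.2), (x.1.1, x.2.1)⟩)
    (fun x _ => ⟨(x.2.1, x.2.2 + x.1.2), (x.2.2, x.1.2)⟩) ?_ ?_ ?_ ?_ ?_
  all_goals
    rintro ⟨⟨a, b⟩, ⟨c, d⟩⟩ h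
    simp at h ⊢
    try omega

lemma multichoose_succ_sum (j e : ℕ) :
    ∑ q ∈ antidiagonal e, Nat.multichoose j q.2 = Nat.multichoose (j+1) e := by
  rw [← Finset.Nat.sum_antidiagonal_swap]
  simp only [Prod.snd_swap]
  rw [Finset.Nat.sum_antidiagonal_eq_sum_range_succ (fun i _ => Nat.multichoose j i)]
  have h := Nat.sum_range_multichoose e j
  rw [Nat.succ_eq_add_one, h, Nat.multichoose_eq, show j + 1 + e - 1 = e + j by omega,
    Nat.choose_symm_add]

lemma ps_zero {n : ℕ} (α : Fin n → ℕ) : ps 0 α = 0 := by simp [ps]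

lemma ps_cons {n : ℕ} (j a : ℕ) (α : Fin n → ℕ) :
    ps (j+1) (Fin.cons a α : Fin (n+1) → ℕ) = a + ps j α := by
  simp [ps, Fin.sum_univ_succ]

lemma card_tuple (n s : ℕ) : (Finset.Nat.antidiagonalTuple n s).card = Nat.multichoose n s := by
  induction n generalizing s with
  | zero => cases s <;> simp
  | succ n ih =>
    rw [Finset.card_eq_sum_ones, sum_tuple_succ, ← multichoose_succ_sum]
    refine Finset.sum_congr rfl fun p _ => ?_
    rw [← ih, Finset.card_eq_sum_ones]

lemma sum_mc_zero (s : ℕ) (g : ℕ → ℕ) (f : ℕ → ℕ) :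
    ∑ p ∈ antidiagonal s, Nat.multichoose 0 p.1 * g p.2 * f p.1 = g s * f 0 := by
  rw [Finset.sum_eq_single (0, s)]
  · simp
  · rintro ⟨a, b⟩ h hne
    cases a with
    | zero => simp at h; simp [h] at hne
    | succ a => simp
  · simp

lemma sum_ps (n j s : ℕ) (hj : j ≤ n) (f : ℕ → ℕ) :
    ∑ α ∈ Finset.Nat.antidiagonalTuple n s, f (ps j α) =
      ∑ p ∈ antidiagonal s, Nat.multichoose j p.1 * Nat.multichoose (n - j) p.2 * f p.1 := by
  induction n generalizing j s f with
  | zero =>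
    obtain rfl : j = 0 := by omega
    simp only [ps_zero]
    rw [sum_mc_zero s (fun b => Nat.multichoose (0 - 0) b) f, Finset.sum_const, card_tuple]
    simp
  | succ n ih =>
    cases j with
    | zero =>
      simp only [ps_zero]
      rw [sum_mc_zero s (fun b => Nat.multichoose ((n+1) - 0) b) f, Finset.sum_const, card_tuple]
      simp
    | succ j =>
      rw [sum_tuple_succ]
      simp only [ps_cons]
      have : ∀ p ∈ antidiagonal s, ∑ α ∈ Finset.Nat.antidiagonalTuple n p.2, f (p.1 + ps j α) =
          ∑ q ∈ antidiagonal p.2, Nat.multichoose j q.1 * Nat.multichoose (n - j) q.2 * f (p.1 + q.1) :=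
        fun p _ => ih j p.2 (by omega) (fun k => f (p.1 + k))
      rw [Finset.sum_congr rfl this,
        sum_triple s (fun a b c => Nat.multichoose j b * Nat.multichoose (n - j) c * f (a + b))]
      refine Finset.sum_congr rfl fun p _ => ?_
      rw [← multichoose_succ_sum, Finset.sum_mul, Finset.sum_mul, Nat.add_sub_add_right]
      refine Finset.sum_congr rfl fun q hq => ?_
      rw [Finset.HasAntidiagonal.mem_antidiagonal] at hq
      rw [hq]

/-- number of compositions with partial sum above t -/
def Dn (n s j t : ℕ) : ℕ := ((Finset.Nat.antidiagonalTuple n s).filter (fun α => t < ps j α)).card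

lemma tele (p q j l : ℕ) :
    ∑ k ∈ range (j+1), p.choose k * (q+1).choose (j + l + 1 - k) =
    ∑ k ∈ range (j+1), (p+1).choose k * q.choose (j + l + 1 - k) + p.choose j * q.choose l := by
  induction j generalizing l with
  | zero =>
    simp [Nat.choose_succ_succ]; ring
  | succ j ih =>
    rw [Finset.sum_range_succ, Finset.sum_range_succ _ (j+1)]
    have h := ih (l+1)
    rw [show j + (l+1) + 1 = j + 1 + l + 1 by ring] at h
    rw [h, show j + 1 + l + 1 - (j+1) = l + 1 by omega, Nat.choose_succ_succ q l,
      Nat.choose_succ_succ p j]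
    ring

lemma Dn_aux (j l s u : ℕ) (hu : u ≤ s) :
    ∑ i ∈ range u, Nat.multichoose (j+1) (s - i) * Nat.multichoose (l+1) i =
    ∑ k ∈ range (j+1), (s - u + (j+1)).choose k * (l + u).choose (j + l + 1 - k) := by
  induction u with
  | zero =>
    symm
    simp only [Finset.range_zero, Finset.sum_empty]
    apply Finset.sum_eq_zero
    intro k hk
    rw [Finset.mem_range] at hk
    rw [Nat.choose_eq_zero_of_lt (show l + 0 < j + l + 1 - k by omega), mul_zero]
  | succ u ih =>
    rw [Finset.sum_range_succ, ih (by omega)]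
    have h := tele (s - (u+1) + (j+1)) (l+u) j l
    rw [← add_assoc l u 1, h, show s - (u+1) + (j+1) + 1 = s - u + (j+1) by omega]
    congr 1
    rw [Nat.multichoose_eq, Nat.multichoose_eq, show j + 1 + (s - u) - 1 = j + (s-u) by omega,
      show l + 1 + u - 1 = l + u by omega, show s - (u+1) + (j+1) = j + (s - u) by omega,
      Nat.choose_symm_add, Nat.choose_symm_add]

lemma Dn_eq (j l s t : ℕ) (ht : t ≤ s) :
    Dn (j + l + 2) s (j+1) t =
    ∑ k ∈ range (j+1), (t + (j+1)).choose k * (l + (s - t)).choose (j + l + 1 - k) := by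
  rw [Dn, Finset.card_filter, sum_ps (j+l+2) (j+1) s (by omega) (fun x => if t < x then 1 else 0)]
  have := Dn_aux j l s (s - t) (by omega)
  rw [show s - (s - t) = t by omega] at this
  rw [← this, ← Finset.Nat.sum_antidiagonal_swap]
  simp only [Prod.snd_swap, Prod.fst_swap]
  rw [Finset.Nat.sum_antidiagonal_eq_sum_range_succ (fun a b => Nat.multichoose (j+1) b * 
    Nat.multichoose (j+l+2 - (j+1)) a * if t < b then 1 else 0)]
  symm
  rw [show j + l + 2 - (j+1) = l + 1 by omega]
  refine Finset.sum_subset_zero_on_sdiff ?_ ?_ ?_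
  · intro x; simp; omega
  · intro x; simp; intros; omega
  · intro x hx
    rw [Finset.mem_range] at hx
    rw [if_pos (by omega), mul_one]

lemma natAbs_count (a b s : ℕ) (ha : a ≤ s) (hb : b ≤ s) :
    ((a : ℤ) - b).natAbs = ∑ t ∈ range s,
      ((if t < a then 1 else 0) * (if t < b then 0 else 1) +
        (if t < a then 0 else 1) * (if t < b then 1 else 0)) := by
  wlog h : a ≤ b generalizing a b with H
  · have := H b a hb ha (by omega)
    rw [← Int.natAbs_neg, neg_sub, this]
    refine Finset.sum_congr rfl fun t _ => ?_
    ring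
  · have : ∀ t ∈ range s, ((if t < a then 1 else 0) * (if t < b then 0 else 1) +
        (if t < a then 0 else 1) * (if t < b then 1 else 0)) = if t ∈ Finset.Ico a b then 1 else 0 := by
      intro t _
      simp only [Finset.mem_Ico]
      split_ifs <;> first | rfl | omega
    rw [Finset.sum_congr rfl this, Finset.sum_ite_mem, Finset.sum_const, smul_eq_mul, mul_one,
      Finset.inter_eq_right.mpr]
    · rw [Nat.card_Ico]; omega
    · intro x; simp; omega

lemma ps_le {n : ℕ} (j s : ℕ) (α : Fin n → ℕ) (h : α ∈ Finset.Nat.antidiagonalTuple n s) :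
    ps j α ≤ s := by
  rw [Finset.Nat.mem_antidiagonalTuple] at h
  rw [← h]
  refine Finset.sum_le_sum fun i _ => ?_
  split_ifs <;> omega

lemma sum_abs (n s j : ℕ) :
    ∑ p ∈ Finset.Nat.antidiagonalTuple n s ×ˢ Finset.Nat.antidiagonalTuple n s,
      ((ps j p.1 : ℤ) - ps j p.2).natAbs =
    ∑ t ∈ range s, 2 * (Dn n s j t * (Nat.multichoose n s - Dn n s j t)) := by
  have h1 : ∀ t, ∑ α ∈ Finset.Nat.antidiagonalTuple n s, (if t < ps j α then 1 else 0) = Dn n s j t := by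
    intro t; rw [Dn, Finset.card_filter]
  have h2 : ∀ t, ∑ α ∈ Finset.Nat.antidiagonalTuple n s, (if t < ps j α then 0 else 1) =
      Nat.multichoose n s - Dn n s j t := by
    intro t
    have : ∑ α ∈ Finset.Nat.antidiagonalTuple n s, (if t < ps j α then 0 else 1) + Dn n s j t =
      Nat.multichoose n s := by
      rw [← h1, ← Finset.sum_add_distrib, ← card_tuple, Finset.card_eq_sum_ones]
      refine Finset.sum_congr rfl fun α _ => ?_
      split_ifs <;> rfl
    omega
  rw [Finset.sum_product]
  have : ∀ α ∈ Finset.Nat.antidiagonalTuple n s, ∀ β ∈ Finset.Nat.antidiagonalTuple n s,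
     ((ps j α : ℤ) - ps j β).natAbs = _ := fun α hα β hβ => natAbs_count _ _ s (ps_le j s α hα) (ps_le j s β hβ)
  rw [Finset.sum_congr rfl fun α hα => Finset.sum_congr rfl (this α hα)]
  rw [Finset.sum_congr rfl fun α _ => Finset.sum_comm, Finset.sum_comm]
  refine Finset.sum_congr rfl fun t _ => ?_
  simp only [Finset.sum_add_distrib, ← Finset.sum_mul_sum, h1, h2]
  ring

lemma EMD_eq (m : ℕ) (α β : Fin (m+1) → ℕ) (s : ℕ) (hα : α ∈ Finset.Nat.antidiagonalTuple (m+1) s)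
    (hβ : β ∈ Finset.Nat.antidiagonalTuple (m+1) s) :
    EMD α β = ∑ j ∈ range m, ((ps (j+1) α : ℤ) - ps (j+1) β).natAbs := by
  have h : ∀ j : Fin (m+1), ∑ i ∈ Finset.univ.filter (fun i : Fin (m+1) => i ≤ j),
      ((α i : ℤ) - (β i : ℤ)) = (ps (j.val+1) α : ℤ) - ps (j.val+1) β := by
    intro j
    simp only [ps, Nat.cast_sum, ← Finset.sum_sub_distrib, Finset.sum_filter]
    refine Finset.sum_congr rfl fun i _ => ?_
    by_cases hi : i ≤ j
    · rw [if_pos hi, if_pos (by omega), if_pos (by omega)]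
    · rw [if_neg hi, if_neg (by omega), if_neg (by omega)]; rfl
  rw [EMD, Finset.sum_congr rfl fun j _ => congrArg Int.natAbs (h j)]
  rw [Fin.sum_univ_eq_sum_range (fun j => ((ps (j+1) α : ℤ) - ps (j+1) β).natAbs),
    Finset.sum_range_succ]
  have e : ∀ γ ∈ Finset.Nat.antidiagonalTuple (m+1) s, ps (m+1) γ = s := by
    intro γ hγ
    rw [Finset.Nat.mem_antidiagonalTuple] at hγ
    rw [← hγ, ps]
    exact Finset.sum_congr rfl fun i _ => if_pos i.isLt
  simp [e α hα, e β hβ]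

lemma sum_EMD (m s : ℕ) :
    ∑ p ∈ Finset.Nat.antidiagonalTuple (m+1) s ×ˢ Finset.Nat.antidiagonalTuple (m+1) s, EMD p.1 p.2 =
    ∑ j ∈ range m, ∑ t ∈ range s, 2 * (Dn (m+1) s (j+1) t * (Nat.multichoose (m+1) s - Dn (m+1) s (j+1) t)) := by
  rw [Finset.sum_congr rfl fun p hp => EMD_eq m p.1 p.2 s (Finset.mem_product.mp hp).1 (Finset.mem_product.mp hp).2]
  rw [Finset.sum_comm]
  exact Finset.sum_congr rfl fun j _ => sum_abs _ _ _

lemma Dn_le (n s j t : ℕ) : Dn n s j t ≤ Nat.multichoose n s := by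
  rw [← card_tuple]; exact Finset.card_filter_le _ _

open Filter Topology

/-- Bernstein term -/
noncomputable def bb (m k : ℕ) (x : ℝ) : ℝ := (m.choose k : ℝ) * x ^ k * (1 - x) ^ (m - k)

/-- Binomial cdf -/
noncomputable def GG (m j : ℕ) (x : ℝ) : ℝ := ∑ k ∈ range j, bb m k x

lemma sub_lim (a : ℕ → ℕ) (y : ℝ) (h : Tendsto (fun s : ℕ => (a s : ℝ) / s) atTop (𝓝 y)) (k : ℕ) :
    Tendsto (fun s : ℕ => ((a s - k : ℕ) : ℝ) / s) atTop (𝓝 y) := by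
  have h0 : Tendsto (fun s : ℕ => (k : ℝ) / s) atTop (𝓝 0) := tendsto_const_div_atTop_nhds_zero_nat _
  have h1 := h.sub h0
  rw [sub_zero] at h1
  refine tendsto_of_tendsto_of_tendsto_of_le_of_le h1 h ?_ ?_
  · intro s
    have : (a s : ℝ) ≤ ((a s - k : ℕ) : ℝ) + k := by exact_mod_cast (by omega : a s ≤ a s - k + k)
    simp only
    rw [← sub_div]
    gcongr
    linarith
  · intro s
    simp only
    gcongr
    omega

lemma add_lim (a : ℕ → ℕ) (y : ℝ) (h : Tendsto (fun s : ℕ => (a s : ℝ) / s) atTop (𝓝 y)) (k : ℕ) :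
    Tendsto (fun s : ℕ => ((a s + k : ℕ) : ℝ) / s) atTop (𝓝 y) := by
  have h0 : Tendsto (fun s : ℕ => (k : ℝ) / s) atTop (𝓝 0) := tendsto_const_div_atTop_nhds_zero_nat _
  have h1 := h.add h0
  rw [add_zero] at h1
  refine h1.congr fun s => ?_
  push_cast
  ring

lemma choose_lim (a : ℕ → ℕ) (y : ℝ) (h : Tendsto (fun s : ℕ => (a s : ℝ) / s) atTop (𝓝 y)) (k : ℕ) :
    Tendsto (fun s : ℕ => ((a s).choose k : ℝ) / (s : ℝ) ^ k) atTop (𝓝 (y ^ k / (k.factorial : ℝ))) := by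
  have hd : Tendsto (fun s : ℕ => ((a s).descFactorial k : ℝ) / (s : ℝ) ^ k) atTop (𝓝 (y ^ k)) := by
    induction k with
    | zero => simp
    | succ k ih =>
      have := (sub_lim a y h k).mul ih
      rw [← pow_succ'] at this
      refine this.congr fun s => ?_
      rw [Nat.descFactorial_succ, div_mul_div_comm, ← pow_succ', Nat.cast_mul]
  refine (hd.div_const (k.factorial : ℝ)).congr fun s => ?_
  rw [Nat.descFactorial_eq_factorial_mul_choose, Nat.cast_mul]
  have : (k.factorial : ℝ) ≠ 0 := by positivity
  field_simp

lemma floor_lim (x : ℝ) (hx : 0 ≤ x) :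
    Tendsto (fun s : ℕ => (⌊(s : ℝ) * x⌋₊ : ℝ) / s) atTop (𝓝 x) := by
  have := (tendsto_nat_floor_mul_div_atTop (R := ℝ) hx).comp tendsto_natCast_atTop_atTop
  refine this.congr fun s => ?_
  simp [mul_comm]

lemma floor_lt (s : ℕ) (x : ℝ) (hx : 0 ≤ x) (hx1 : x ≤ 1) : ⌊(s : ℝ) * x⌋₊ ≤ s := by
  apply Nat.floor_le_of_le
  nlinarith [Nat.cast_nonneg (α := ℝ) s]

lemma D_lim (j l : ℕ) (x : ℝ) (hx : 0 ≤ x) (hx1 : x ≤ 1) :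
    Tendsto (fun s : ℕ => (Dn (j + l + 2) s (j+1) ⌊(s : ℝ) * x⌋₊ : ℝ) / (Nat.multichoose (j+l+2) s : ℝ))
      atTop (𝓝 (GG (j+l+1) (j+1) x)) := by
  have hone : Tendsto (fun s : ℕ => (s : ℝ) / s) atTop (𝓝 1) := by
    refine tendsto_const_nhds.congr' ?_
    filter_upwards [eventually_gt_atTop 0] with s hs
    rw [div_self]; positivity
  have hN : Tendsto (fun s : ℕ => (Nat.multichoose (j+l+2) s : ℝ) / (s : ℝ) ^ (j+l+1)) atTop
      (𝓝 (1 / ((j+l+1).factorial : ℝ))) := by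
    have := choose_lim (fun s => s + (j+l+1)) 1 (add_lim (fun s => s) 1 hone _) (j+l+1)
    rw [one_pow] at this
    refine this.congr fun s => ?_
    rw [Nat.multichoose_eq, show j + l + 2 + s - 1 = s + (j + l + 1) by omega, Nat.choose_symm_add]
  have hfl := floor_lim x hx
  have hsub : Tendsto (fun s : ℕ => ((s - ⌊(s : ℝ) * x⌋₊ : ℕ) : ℝ) / s) atTop (𝓝 (1 - x)) := by
    refine (hone.sub hfl).congr fun s => ?_
    rw [Nat.cast_sub (floor_lt s x hx hx1), sub_div]
  have hD : Tendsto (fun s : ℕ => (Dn (j + l + 2) s (j+1) ⌊(s : ℝ) * x⌋₊ : ℝ) / (s : ℝ) ^ (j+l+1))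
      atTop (𝓝 (∑ k ∈ range (j+1), (x ^ k / (k.factorial : ℝ)) *
        ((1 - x) ^ (j + l + 1 - k) / ((j + l + 1 - k).factorial : ℝ)))) := by
    have : Tendsto (fun s : ℕ => ∑ k ∈ range (j+1),
        (((⌊(s : ℝ) * x⌋₊ + (j+1)).choose k : ℝ) / (s : ℝ) ^ k) *
        (((s - ⌊(s : ℝ) * x⌋₊ + l).choose (j + l + 1 - k) : ℝ) / (s : ℝ) ^ (j + l + 1 - k))) atTop
        (𝓝 (∑ k ∈ range (j+1), (x ^ k / (k.factorial : ℝ)) *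
        ((1 - x) ^ (j + l + 1 - k) / ((j + l + 1 - k).factorial : ℝ)))) := by
      refine tendsto_finsetSum _ fun k _ => ?_
      exact (choose_lim _ _ (add_lim _ _ hfl (j+1)) k).mul
        (choose_lim _ _ (add_lim _ _ hsub l) (j + l + 1 - k))
    refine this.congr fun s => ?_
    rw [Dn_eq _ _ _ _ (floor_lt s x hx hx1), Nat.cast_sum, Finset.sum_div]
    refine Finset.sum_congr rfl fun k hk => ?_
    rw [Finset.mem_range] at hk
    rw [div_mul_div_comm, ← pow_add, show k + (j + l + 1 - k) = j + l + 1 by omega, Nat.cast_mul,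
      add_comm l]
  have hq := hD.div hN (by positivity)
  have e : (∑ k ∈ range (j+1), (x ^ k / (k.factorial : ℝ)) *
        ((1 - x) ^ (j + l + 1 - k) / ((j + l + 1 - k).factorial : ℝ))) / (1 / ((j+l+1).factorial : ℝ))
        = GG (j+l+1) (j+1) x := by
    rw [GG, Finset.sum_div]
    refine Finset.sum_congr rfl fun k hk => ?_
    rw [Finset.mem_range] at hk
    rw [bb, Nat.cast_choose ℝ (show k ≤ j + l + 1 by omega)]
    have h1 : ((j+l+1).factorial : ℝ) ≠ 0 := by positivity
    have h2 : ((k).factorial : ℝ) ≠ 0 := by positivity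
    have h3 : ((j+l+1-k).factorial : ℝ) ≠ 0 := by positivity
    field_simp
  rw [e] at hq
  refine hq.congr' ?_
  filter_upwards [eventually_gt_atTop 0] with s hs
  have : (s : ℝ) ^ (j + l + 1) ≠ 0 := by positivity
  simp only [Pi.div_apply]
  rw [div_div_div_cancel_right₀ this]

lemma int_floor (g : ℕ → ℝ) (s : ℕ) :
    ∫ x in (0:ℝ)..s, g ⌊x⌋₊ = ∑ t ∈ range s, g t := by
  have hc : ∀ k : ℕ, Set.EqOn (fun _ => g k) (fun x : ℝ => g ⌊x⌋₊) (Set.Ioo (k:ℝ) ((k+1 : ℕ):ℝ)) := by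
    intro k x hx
    simp only
    rw [(Nat.floor_eq_iff (by linarith [hx.1, Nat.cast_nonneg (α := ℝ) k])).mpr
      ⟨hx.1.le, by have := hx.2; push_cast at this; exact this⟩]
  have hle : ∀ k : ℕ, (k : ℝ) ≤ ((k+1 : ℕ) : ℝ) := fun k => by push_cast; linarith
  have hint : ∀ k < s, IntervalIntegrable (fun x : ℝ => g ⌊x⌋₊) MeasureTheory.volume (k : ℝ) ((k+1 : ℕ):ℝ) := by
    intro k _
    rw [intervalIntegrable_iff_integrableOn_Ioo_of_le (hle k)]
    refine MeasureTheory.IntegrableOn.congr_fun ?_ (hc k) measurableSet_Ioo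
    exact MeasureTheory.integrableOn_const (by simp)
  have := intervalIntegral.sum_integral_adjacent_intervals (a := fun k : ℕ => (k:ℝ)) hint
  rw [Nat.cast_zero] at this
  rw [← this]
  refine Finset.sum_congr rfl fun k _ => ?_
  rw [intervalIntegral.integral_of_le (hle k), MeasureTheory.integral_Ioc_eq_integral_Ioo,
    ← MeasureTheory.setIntegral_congr_fun measurableSet_Ioo (hc k)]
  simp

lemma riemann (g : ℕ → ℕ → ℝ) (h : ℝ → ℝ) (hg : ∀ s t, |g s t| ≤ 1)
    (hl : ∀ x, 0 ≤ x → x ≤ 1 → Tendsto (fun s : ℕ => g s ⌊(s : ℝ) * x⌋₊) atTop (𝓝 (h x))) :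
    Tendsto (fun s : ℕ => (∑ t ∈ range s, g s t) / s) atTop (𝓝 (∫ x in (0:ℝ)..1, h x)) := by
  have : Tendsto (fun s : ℕ => ∫ x in (0:ℝ)..1, g s ⌊(s : ℝ) * x⌋₊) atTop (𝓝 (∫ x in (0:ℝ)..1, h x)) := by
    refine intervalIntegral.tendsto_integral_filter_of_dominated_convergence (fun _ => 1) ?_ ?_ ?_ ?_
    · refine Eventually.of_forall fun s => Measurable.aestronglyMeasurable ?_
      exact (measurable_from_top (f := g s)).comp (Nat.measurable_floor.comp (measurable_const_mul _))
    · refine Eventually.of_forall fun s => MeasureTheory.ae_of_all _ fun x _ => hg _ _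
    · simp
    · refine MeasureTheory.ae_of_all _ fun x hx => ?_
      rw [Set.uIoc_of_le zero_le_one] at hx
      exact hl x hx.1.le hx.2
  refine this.congr' ?_
  filter_upwards [eventually_gt_atTop 0] with s hs
  have hs' : (s : ℝ) ≠ 0 := by positivity
  rw [intervalIntegral.integral_comp_mul_left (fun x => g s ⌊x⌋₊) hs', mul_zero, mul_one, int_floor,
    smul_eq_mul, div_eq_inv_mul]

lemma main_lim (m : ℕ) :
    Tendsto
      (fun s : ℕ =>
        (((∑ p ∈ Finset.Nat.antidiagonalTuple (m+1) s ×ˢ Finset.Nat.antidiagonalTuple (m+1) s,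
              EMD p.1 p.2 : ℕ) : ℝ) / (Nat.multichoose (m+1) s : ℝ) ^ 2) / (s : ℝ))
      atTop
      (𝓝 (∑ j ∈ range m, 2 * ∫ x in (0:ℝ)..1, GG m (j+1) x * (1 - GG m (j+1) x))) := by
  have key : ∀ j ∈ range m, Tendsto (fun s : ℕ => 2 * ((∑ t ∈ range s,
      ((Dn (m+1) s (j+1) t : ℝ) / (Nat.multichoose (m+1) s : ℝ)) *
        (1 - (Dn (m+1) s (j+1) t : ℝ) / (Nat.multichoose (m+1) s : ℝ))) / s)) atTop
        (𝓝 (2 * ∫ x in (0:ℝ)..1, GG m (j+1) x * (1 - GG m (j+1) x))) := by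
    intro j hj
    refine Tendsto.const_mul _ (riemann (fun s t => ((Dn (m+1) s (j+1) t : ℝ) / (Nat.multichoose (m+1) s : ℝ)) *
        (1 - (Dn (m+1) s (j+1) t : ℝ) / (Nat.multichoose (m+1) s : ℝ))) _ ?_ ?_)
    · intro s t
      have h0 : 0 ≤ (Dn (m+1) s (j+1) t : ℝ) / (Nat.multichoose (m+1) s : ℝ) := by positivity
      have h1 : (Dn (m+1) s (j+1) t : ℝ) / (Nat.multichoose (m+1) s : ℝ) ≤ 1 := by
        apply div_le_one_of_le₀ _ (by positivity)
        exact_mod_cast Dn_le _ _ _ _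
      rw [abs_of_nonneg (mul_nonneg h0 (by linarith))]
      nlinarith
    · intro x hx hx1
      obtain ⟨l, rfl⟩ : ∃ l, m = j + l + 1 := ⟨m - j - 1, by rw [Finset.mem_range] at hj; omega⟩
      have := D_lim j l x hx hx1
      exact this.mul (this.const_sub 1)
  refine (tendsto_finsetSum _ key).congr fun s => ?_
  have hN : (Nat.multichoose (m+1) s : ℝ) ≠ 0 := by
    rw [Nat.multichoose_eq]
    exact_mod_cast (Nat.choose_pos (by omega)).ne'
  rw [sum_EMD]
  push_cast
  rw [Finset.sum_div, Finset.sum_div]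
  refine Finset.sum_congr rfl fun j _ => ?_
  rw [← mul_div_assoc, Finset.mul_sum, Finset.sum_div _ _ (_ ^ 2)]
  congr 1
  refine Finset.sum_congr rfl fun t _ => ?_
  rw [Nat.cast_sub (Dn_le _ _ _ _)]
  field_simp

lemma beta_nat (a b : ℕ) : ∫ x in (0:ℝ)..1, x ^ a * (1 - x) ^ b =
    (a.factorial : ℝ) * b.factorial / (a + b + 1).factorial := by
  induction b generalizing a with
  | zero =>
    simp [Nat.factorial_succ]
    have : (a.factorial : ℝ) ≠ 0 := by positivity
    field_simp
  | succ b ih =>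
    have e : ∀ x : ℝ, x ^ a * (1 - x) ^ (b+1) = x ^ a * (1 - x) ^ b - x ^ (a+1) * (1 - x) ^ b := by
      intro x; ring
    simp only [e]
    rw [intervalIntegral.integral_sub (Continuous.intervalIntegrable (by fun_prop) _ _)
      (Continuous.intervalIntegrable (by fun_prop) _ _), ih, ih]
    rw [show a + 1 + b + 1 = (a + b + 1) + 1 by ring, show a + (b + 1) + 1 = (a + b + 1) + 1 by ring]
    rw [Nat.factorial_succ (a+b+1), Nat.factorial_succ a, Nat.factorial_succ b]
    have : ((a+b+1).factorial : ℝ) ≠ 0 := by positivity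
    push_cast
    field_simp
    ring

/-- auxiliary sequence -/
noncomputable def gg (k : ℕ) : ℝ := ((2 * k + 1).factorial : ℝ) / (k.factorial : ℝ) ^ 2

lemma gg_succ (k : ℕ) : ((k : ℝ) + 1) * gg (k+1) = (4 * k + 6) * gg k := by
  have : (k.factorial : ℝ) ≠ 0 := by positivity
  rw [gg, gg, show 2 * (k+1) + 1 = (2 * k + 1) + 1 + 1 by ring, Nat.factorial_succ (2*k+1+1),
    Nat.factorial_succ (2*k+1), Nat.factorial_succ k]
  push_cast
  field_simp
  ring

lemma gg_conv (m : ℕ) : ∑ p ∈ antidiagonal m, gg p.1 * gg p.2 = 4 ^ m * (m + 1) * (m + 2) / 2 := by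
  have hW : ∀ m : ℕ, 2 * ∑ p ∈ antidiagonal m, (p.1 : ℝ) * gg p.1 * gg p.2 =
      m * ∑ p ∈ antidiagonal m, gg p.1 * gg p.2 := by
    intro m
    have h1 : ∑ p ∈ antidiagonal m, (p.1 : ℝ) * gg p.1 * gg p.2 =
      ∑ p ∈ antidiagonal m, (p.2 : ℝ) * gg p.1 * gg p.2 := by
      rw [← Finset.Nat.sum_antidiagonal_swap]
      refine Finset.sum_congr rfl fun p _ => ?_
      simp only [Prod.fst_swap, Prod.snd_swap]
      ring
    rw [two_mul]
    nth_rewrite 2 [h1]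
    rw [← Finset.sum_add_distrib, Finset.mul_sum]
    refine Finset.sum_congr rfl fun p hp => ?_
    rw [Finset.HasAntidiagonal.mem_antidiagonal] at hp
    rw [← hp]; push_cast; ring
  induction m with
  | zero => simp [gg]
  | succ m ih =>
    have h := hW (m+1)
    rw [Finset.Nat.sum_antidiagonal_succ (f := fun p : ℕ × ℕ => (p.1 : ℝ) * gg p.1 * gg p.2)] at h
    have h2 : ∑ p ∈ antidiagonal m, ((p.1 + 1 : ℕ) : ℝ) * gg (p.1 + 1) * gg p.2 =
      4 * ∑ p ∈ antidiagonal m, (p.1 : ℝ) * gg p.1 * gg p.2 + 6 * ∑ p ∈ antidiagonal m, gg p.1 * gg p.2 := by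
      rw [Finset.mul_sum, Finset.mul_sum, ← Finset.sum_add_distrib]
      refine Finset.sum_congr rfl fun p hp => ?_
      push_cast
      rw [gg_succ]; ring
    have h3 := hW m
    rw [ih] at h2 h3
    rw [h2] at h
    have hm : ((m : ℝ) + 1) ≠ 0 := by positivity
    apply mul_left_cancel₀ hm
    push_cast at h ⊢
    linear_combination 4 * h3 - h

lemma bb_succ (m k : ℕ) (x : ℝ) : bb (m+1) (k+1) x = (1 - x) * bb m (k+1) x + x * bb m k x := by
  simp only [bb]
  rw [Nat.choose_succ_succ, Nat.add_sub_add_right]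
  push_cast
  rcases lt_or_ge k m with h | h
  · rw [show m - k = (m - (k+1)) + 1 by omega]
    ring
  · rw [Nat.choose_eq_zero_of_lt (show m < k + 1 by omega)]
    push_cast
    ring

lemma GG_succ (m j : ℕ) (x : ℝ) : GG (m+1) (j+1) x = (1 - x) * GG m (j+1) x + x * GG m j x := by
  induction j with
  | zero => simp [GG, bb]; ring
  | succ j ih =>
    have e : ∀ m j, GG m (j+1) x = GG m j x + bb m j x := fun m j => Finset.sum_range_succ _ _
    rw [e (m+1) (j+1), ih, bb_succ, e m (j+1), e m j]
    ring

lemma GG_top (m : ℕ) (x : ℝ) : GG m (m+1) x = 1 := by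
  have := add_pow x (1 - x) m
  rw [add_sub_cancel, one_pow] at this
  rw [this, GG]
  refine Finset.sum_congr rfl fun k _ => ?_
  rw [bb]; ring

/-- total -/
noncomputable def TT (m : ℕ) (x : ℝ) : ℝ := ∑ j ∈ range m, GG m (j+1) x * (1 - GG m (j+1) x)

lemma TT_succ (m : ℕ) (x : ℝ) :
    TT (m+1) x = TT m x + x * (1 - x) * ∑ k ∈ range (m+1), bb m k x ^ 2 := by
  have h1 : ∀ j, GG (m+1) (j+1) x * (1 - GG (m+1) (j+1) x) =
      (1 - x) * (GG m (j+1) x * (1 - GG m (j+1) x)) + x * (GG m j x * (1 - GG m j x)) +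
      x * (1 - x) * bb m j x ^ 2 := by
    intro j
    have e : GG m (j+1) x = GG m j x + bb m j x := Finset.sum_range_succ _ _
    rw [GG_succ, e]; ring
  rw [TT, Finset.sum_congr rfl fun j _ => h1 j, Finset.sum_add_distrib, Finset.sum_add_distrib,
    ← Finset.mul_sum, ← Finset.mul_sum, ← Finset.mul_sum,
    Finset.sum_range_succ (fun j => GG m (j+1) x * (1 - GG m (j+1) x)),
    Finset.sum_range_succ' (fun j => GG m j x * (1 - GG m j x)), GG_top]
  have h0 : GG m 0 x = 0 := by simp [GG]
  rw [h0, TT]; ring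

@[fun_prop]
lemma bb_cont (m k : ℕ) : Continuous (bb m k) := by unfold bb; fun_prop

@[fun_prop]
lemma GG_cont (m k : ℕ) : Continuous (GG m k) := by
  have : GG m k = fun x => ∑ i ∈ range k, bb m i x := rfl
  rw [this]; fun_prop

@[fun_prop]
lemma TT_cont (m : ℕ) : Continuous (TT m) := by
  have : TT m = fun x => ∑ j ∈ range m, GG m (j+1) x * (1 - GG m (j+1) x) := rfl
  rw [this]; fun_prop

lemma int_bb (m : ℕ) : ∫ x in (0:ℝ)..1, x * (1 - x) * ∑ k ∈ range (m+1), bb m k x ^ 2 =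
    (m.factorial : ℝ) ^ 2 / ((2 * m + 3).factorial : ℝ) * (4 ^ m * (m + 1) * (m + 2) / 2) := by
  simp only [Finset.mul_sum]
  rw [intervalIntegral.integral_finsetSum
    (fun k _ => Continuous.intervalIntegrable (by fun_prop) _ _), ← gg_conv,
    Finset.Nat.sum_antidiagonal_eq_sum_range_succ (fun a b => gg a * gg b), Finset.mul_sum]
  refine Finset.sum_congr rfl fun k hk => ?_
  rw [Finset.mem_range] at hk
  have e : ∀ x : ℝ, x * (1 - x) * bb m k x ^ 2 =
      (m.choose k : ℝ) ^ 2 * (x ^ (2 * k + 1) * (1 - x) ^ (2 * (m - k) + 1)) := by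
    intro x; rw [bb]; ring
  simp only [e]
  rw [intervalIntegral.integral_const_mul, beta_nat, Nat.cast_choose ℝ (show k ≤ m by omega), gg, gg,
    show 2 * k + 1 + (2 * (m - k) + 1) + 1 = 2 * m + 3 by omega]
  have h1 : (k.factorial : ℝ) ≠ 0 := by positivity
  have h2 : ((m-k).factorial : ℝ) ≠ 0 := by positivity
  have h3 : ((2*m+3).factorial : ℝ) ≠ 0 := by positivity
  field_simp

lemma Gamma_half (m : ℕ) : Real.Gamma ((m : ℝ) + 1 + 1/2) =
    Real.sqrt Real.pi * ((2 * m + 2).factorial : ℝ) / (4 ^ (m+1) * ((m+1).factorial : ℝ)) := by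
  induction m with
  | zero =>
    rw [Nat.cast_zero, show (0:ℝ) + 1 + 1/2 = 1/2 + 1 by norm_num, Real.Gamma_add_one (by norm_num),
      Real.Gamma_one_half_eq]
    norm_num [Nat.factorial]
    ring
  | succ m ih =>
    rw [show ((m+1 : ℕ) : ℝ) + 1 + 1/2 = ((m : ℝ) + 1 + 1/2) + 1 by push_cast; ring,
      Real.Gamma_add_one (by positivity), ih, show 2 * (m+1) + 2 = (2 * m + 2) + 1 + 1 by ring,
      Nat.factorial_succ (2*m+2+1), Nat.factorial_succ (2*m+2), Nat.factorial_succ (m+1)]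
    have : ((m+1).factorial : ℝ) ≠ 0 := by positivity
    push_cast
    field_simp
    ring

lemma int_TT (m : ℕ) : 2 * ∫ x in (0:ℝ)..1, TT m x =
    Real.sqrt Real.pi * m * Real.Gamma ((m : ℝ) + 1) / (4 * Real.Gamma ((m : ℝ) + 1 + 1/2)) := by
  have hpi : Real.sqrt Real.pi ≠ 0 := by positivity
  have hR : ∀ m : ℕ, Real.sqrt Real.pi * m * Real.Gamma ((m : ℝ) + 1) / (4 * Real.Gamma ((m : ℝ) + 1 + 1/2))
      = m * m.factorial * 4 ^ m * (m+1).factorial / (2 * m + 2).factorial := by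
    intro m
    rw [Gamma_half, Real.Gamma_nat_eq_factorial]
    have : ((m+1).factorial : ℝ) ≠ 0 := by positivity
    have : ((2 * m+2).factorial : ℝ) ≠ 0 := by positivity
    field_simp
    ring
  rw [hR]
  induction m with
  | zero => simp [TT]
  | succ m ih =>
    simp only [TT_succ]
    rw [intervalIntegral.integral_add (Continuous.intervalIntegrable (by fun_prop) _ _)
      (Continuous.intervalIntegrable (by fun_prop) _ _), int_bb, mul_add, ih,
      show 2 * (m+1) + 2 = (2 * m + 2) + 1 + 1 by ring, show 2 * m + 3 = (2 * m + 2) + 1 by ring,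
      Nat.factorial_succ (2*m+2+1), Nat.factorial_succ (2*m+2), Nat.factorial_succ (m+1),
      Nat.factorial_succ m]
    have : ((2 * m+2).factorial : ℝ) ≠ 0 := by positivity
    push_cast
    field_simp
    ring

end EMDaux

/-- Remark 4.4: with `E(s)` the expected EMD over uniformly random pairs of weak
compositions of `s` into `n` parts, `E(s)/s → √π·(n-1)·Γ(n) / (4·Γ(n+1/2))` as
`s → ∞`. -/
theorem expected_EMD_limit (n : ℕ) (hn : 2 ≤ n) :
    Filter.Tendsto
      (fun s : ℕ =>
        (((∑ p ∈ Finset.Nat.antidiagonalTuple n s ×ˢ Finset.Nat.antidiagonalTuple n s,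
              EMD p.1 p.2 : ℕ) : ℝ) / (((s + n - 1).choose s : ℝ)) ^ 2) / (s : ℝ))
      Filter.atTop
      (nhds (Real.sqrt Real.pi * ((n : ℝ) - 1) * Real.Gamma (n : ℝ)
        / (4 * Real.Gamma ((n : ℝ) + 1 / 2)))) := by
  obtain ⟨m, rfl⟩ : ∃ m, n = m + 1 := ⟨n - 1, by omega⟩
  have h := EMDaux.main_lim m
  have e := EMDaux.int_TT m
  have e2 : ∑ j ∈ range m, 2 * ∫ x in (0:ℝ)..1, EMDaux.GG m (j+1) x * (1 - EMDaux.GG m (j+1) x) =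
      2 * ∫ x in (0:ℝ)..1, EMDaux.TT m x := by
    simp only [EMDaux.TT]
    rw [intervalIntegral.integral_finsetSum
      (fun k _ => Continuous.intervalIntegrable (by fun_prop) _ _), Finset.mul_sum]
  rw [e2, e] at h
  have e3 : (((m + 1 : ℕ) : ℝ) - 1) = m := by push_cast; ring
  rw [e3]
  push_cast at h ⊢
  refine h.congr fun s => ?_
  rw [Nat.multichoose_eq, show m + 1 + s - 1 = s + (m + 1) - 1 by omega]
end
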